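/- arXiv:2106.08149 — 3 statements merged into one kernel-verified Lean document; each statement's English description precedes it below -/
import Mathlib

section
/- Let X be a Banach space, q > 0, f : X → ℝ ∪ {+∞} lower semicontinuous and convex, and let x̄ ∈ dom f be a local minimizer of f. (a) If x̄ is a (q+1)-order sharp minimizer of f with modulus ρ > 0, then D_q ∂f(x̄, 0) is q-order positively definite with modulus λ := ρ. (b) If X is finite-dimensional and D_q ∂f(x̄, 0) is q-order positively definite with modulus λ > 0, then for any τ ∈ (0, λ), x̄ is a (q+1)-order sharp minimizer of f with modulus ρ := q^q/(q+1)^{q+1} · τ. Consequently, if X is finite-dimensional, x̄ is a (q+1)-order sharp minimizer of f if and only if D_q ∂f(x̄, 0) is q-order positively definite, and q^q/(q+1)^{q+1} · ‖D_q ∂f(x̄, 0)‖*_q ≤ shrp_{q+1} f(x̄) ≤ ‖D_q ∂f(x̄, 0)‖*_q. -/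
/-!
Sharpness implies definiteness because the subgradient inequality at `x₀ + t u`, tested at `x₀`,
reads `f (x₀ + t u) - f x₀ ≤ t ^ (q + 1) ⟨v, u⟩` when `t ^ q v ∈ ∂f (x₀ + t u)`
(`posDefWith_of_sharp`).

For the converse, fix `τ < l`. By compactness, definiteness of `D_q ∂f(x₀, 0)` gives
`‖x*‖ ≥ τ ‖x - x₀‖ ^ q` for all subgradients at points near `x₀` (`strongly_subregular`).
By convexity `x₀` is a global minimizer. If `f x - f x₀ < c τ r ^ (q + 1)` with `r = ‖x - x₀‖` and
`c = q ^ q / (q + 1) ^ (q + 1)`, minimizing `f + κ ‖· - x‖` with `κ = (f x - f x₀) (q + 1) / r`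
produces a point `z` within `r / (q + 1)` of `x` that carries a subgradient of norm at most `κ`
(`exists_near_subgradient`; the subgradient comes from the Hahn–Banach separation in
`exists_subgradient`). Since `‖z - x₀‖ ≥ r q / (q + 1)`, this contradicts the lower bound on
subgradients (`sharp_of_posDefWith`).

The two estimates on moduli follow since `l ≤ ‖H‖*_q` is the same as definiteness with
modulus `l` (`ofReal_le_starNorm_iff`).
-/

noncomputable section

open Filter Topology Set Pointwise
open scoped ENNReal RealInnerProductSpace

variable {X : Type*} {Y : Type*} [NormedAddCommGroup X] [NormedSpace ℝ X]
  [NormedAddCommGroup Y] [NormedSpace ℝ Y]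

/-- A set-valued mapping `H : X ⇉ Y` is `q`-order positively homogeneous if `0 ∈ H 0`
and `H (l • x) = l ^ q • H x` for all `x` and all `l > 0`. -/
def PosHom (q : ℝ) (H : X → Set Y) : Prop :=
  (0 : Y) ∈ H 0 ∧ ∀ (x : X) (l : ℝ), 0 < l → H (l • x) = (l ^ q) • H x

/-- A single-valued mapping `f : X → Y` is `q`-order positively homogeneous if `f 0 = 0`
and `f (l • x) = l ^ q • f x` for all `x` and all `l > 0`. -/
def PosHomFun (q : ℝ) (f : X → Y) : Prop :=
  f 0 = 0 ∧ ∀ (x : X) (l : ℝ), 0 < l → f (l • x) = (l ^ q) • f x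

/-- The inverse of a set-valued mapping. -/
def svInv (H : X → Set Y) : Y → Set X := fun y => {x | y ∈ H x}

/-- `‖H‖⁺_q = sup {‖y‖/‖x‖^q : (x,y) ∈ gph H, (x,y) ≠ (0,0)}`, with `sup ∅ = 0` and
ratios with `x = 0`, `y ≠ 0` equal to `+∞`. -/
def plusNorm (q : ℝ) (H : X → Set Y) : ℝ≥0∞ :=
  ⨆ (p : X × Y) (_ : p.2 ∈ H p.1 ∧ p ≠ 0),
    ENNReal.ofReal ‖p.2‖ / ENNReal.ofReal (‖p.1‖ ^ q)

/-- `‖H‖⊖_q = inf {‖y‖/‖x‖^q : (x,y) ∈ gph H, (x,y) ≠ (0,0)}`, with `inf ∅ = +∞` and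
ratios with `x = 0`, `y ≠ 0` equal to `+∞`. -/
def minusNorm (q : ℝ) (H : X → Set Y) : ℝ≥0∞ :=
  ⨅ (p : X × Y) (_ : p.2 ∈ H p.1 ∧ p ≠ 0),
    ENNReal.ofReal ‖p.2‖ / ENNReal.ofReal (‖p.1‖ ^ q)

/-- Outer semicontinuity of a set-valued mapping at a point (sequential form). -/
def OuterSemicontAt (H : X → Set Y) (x₀ : X) : Prop :=
  ∀ (u : ℕ → X) (v : ℕ → Y) (y : Y), (∀ k, v k ∈ H (u k)) →
    Tendsto u atTop (𝓝 x₀) → Tendsto v atTop (𝓝 y) → y ∈ H x₀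

/-- The `q`-order graphical derivative of `F` at `(x₀, y₀) ∈ gph F`. -/
def gder (q : ℝ) (F : X → Set Y) (x₀ : X) (y₀ : Y) : X → Set Y := fun x =>
  {y | ∃ (u : ℕ → X) (v : ℕ → Y) (t : ℕ → ℝ),
    Tendsto u atTop (𝓝 x) ∧ Tendsto v atTop (𝓝 y) ∧
    (∀ k, 0 < t k) ∧ Tendsto t atTop (𝓝 0) ∧
    ∀ k, y₀ + (t k ^ q) • v k ∈ F (x₀ + t k • u k)}

/-- `f` is `q`-order Hadamard directionally differentiable at `x₀` with derivative `Df`: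
for each `x`, `(f (x₀ + t u) - f x₀) / t ^ q → Df x` as `u → x`, `t ↓ 0`. -/
def HadamardDeriv (q : ℝ) (f : X → Y) (x₀ : X) (Df : X → Y) : Prop :=
  ∀ x : X, Tendsto (fun p : X × ℝ => ((p.2 ^ q)⁻¹) • (f (x₀ + p.2 • p.1) - f x₀))
    ((𝓝 x) ×ˢ (𝓝[>] (0 : ℝ))) (𝓝 (Df x))

/-- The `q`-order Hadamard directional subderivative
`f'_q(x₀; x) = liminf_{u → x, t ↓ 0} (f (x₀ + t u) - f x₀) / t ^ q`. -/
def subder (q : ℝ) (f : X → EReal) (x₀ : X) (x : X) : EReal :=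
  liminf (fun p : X × ℝ => (f (x₀ + p.2 • p.1) - f x₀) / ((p.2 ^ q : ℝ) : EReal))
    ((𝓝 x) ×ˢ (𝓝[>] (0 : ℝ)))

/-- The nonnegative part of an extended real number, as a value in `[0, +∞]`. -/
def erealPos (x : EReal) : ℝ≥0∞ := if x = ⊤ then ⊤ else ENNReal.ofReal x.toReal

/-- `‖f'_q(x₀; ·)‖_q = inf_{‖x‖ = 1} (f'_q(x₀; x))₊`, with `inf ∅ = +∞`. -/
def subderNorm (q : ℝ) (f : X → EReal) (x₀ : X) : ℝ≥0∞ :=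
  ⨅ (x : X) (_ : ‖x‖ = 1), erealPos (subder q f x₀ x)

/-- The epigraphical mapping of `f`. -/
def epiMap (f : X → EReal) : X → Set ℝ := fun x => {μ : ℝ | f x ≤ (μ : EReal)}

/-- `F` is `q`-order strongly subregular at `(x₀, y₀)` with modulus `τ`. -/
def StrSubregWith (q τ : ℝ) (F : X → Set Y) (x₀ : X) (y₀ : Y) : Prop :=
  ∃ U ∈ 𝓝 x₀, ∃ V ∈ 𝓝 y₀, ∀ x ∈ U,
    ENNReal.ofReal (τ * ‖x - x₀‖ ^ q) ≤ EMetric.infEdist y₀ (F x ∩ V)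

/-- `srg_q F (x₀, y₀)`: the supremum of all moduli of `q`-order strong subregularity. -/
def srgMod (q : ℝ) (F : X → Set Y) (x₀ : X) (y₀ : Y) : ℝ≥0∞ :=
  ⨆ (τ : ℝ) (_ : 0 < τ ∧ StrSubregWith q τ F x₀ y₀), ENNReal.ofReal τ

/-- `S` possesses the `q`-order isolated calmness property at `(y₀, x₀)` with modulus `τ`. -/
def CalmWith (q τ : ℝ) (S : Y → Set X) (y₀ : Y) (x₀ : X) : Prop :=
  ∃ U ∈ 𝓝 x₀, ∃ V ∈ 𝓝 y₀, ∀ y ∈ V, ∀ x ∈ S y, x ∈ U → τ * ‖x - x₀‖ ^ q ≤ ‖y - y₀‖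

/-- `clm_q S (y₀, x₀)`: the supremum of all moduli of `q`-order isolated calmness. -/
def clmMod (q : ℝ) (S : Y → Set X) (y₀ : Y) (x₀ : X) : ℝ≥0∞ :=
  ⨆ (τ : ℝ) (_ : 0 < τ ∧ CalmWith q τ S y₀ x₀), ENNReal.ofReal τ

/-- `x₀` is a `q`-order sharp minimizer of `f` with modulus `τ`. -/
def SharpMinWith (q τ : ℝ) (f : X → EReal) (x₀ : X) : Prop :=
  ∃ U ∈ 𝓝 x₀, ∀ x ∈ U, ((τ * ‖x - x₀‖ ^ q : ℝ) : EReal) ≤ f x - f x₀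

/-- `shrp_q f (x₀)`: the supremum of all moduli of `q`-order sharp minimality. -/
def shrpMod (q : ℝ) (f : X → EReal) (x₀ : X) : ℝ≥0∞ :=
  ⨆ (τ : ℝ) (_ : 0 < τ ∧ SharpMinWith q τ f x₀), ENNReal.ofReal τ

/-- `H : X ⇉ X*` is `q`-order positively definite with modulus `l`:
`⟨x*, x⟩ ≥ l ‖x‖^(q+1)` for all `(x, x*) ∈ gph H`. -/
def PosDefWith (q l : ℝ) (H : X → Set (X →L[ℝ] ℝ)) : Prop :=
  ∀ (x : X), ∀ xs ∈ H x, l * ‖x‖ ^ (q + 1) ≤ xs x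

/-- `‖H‖*_q = inf {⟨x*, x⟩₊ / ‖x‖^(q+1) : (x, x*) ∈ gph H, x ≠ 0}`, with `inf ∅ = +∞`. -/
def starNorm (q : ℝ) (H : X → Set (X →L[ℝ] ℝ)) : ℝ≥0∞ :=
  ⨅ (p : X × (X →L[ℝ] ℝ)) (_ : p.2 ∈ H p.1 ∧ p.1 ≠ 0),
    ENNReal.ofReal (p.2 p.1) / ENNReal.ofReal (‖p.1‖ ^ (q + 1))

/-- The convex subdifferential of `f : X → ℝ ∪ {+∞}` at `x`. -/
def subdiff (f : X → EReal) (x : X) : Set (X →L[ℝ] ℝ) :=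
  {xs | ∀ u : X, ((xs (u - x) : ℝ) : EReal) ≤ f u - f x}

/-- Convexity for extended-real-valued functions. -/
def EConvexOn (f : X → EReal) : Prop :=
  ∀ x y : X, ∀ a b : ℝ, 0 ≤ a → 0 ≤ b → a + b = 1 →
    f (a • x + b • y) ≤ (a : EReal) * f x + (b : EReal) * f y

/-! ### Convexity and subgradients over the reals -/

theorem coe_le_sub_coe_iff {y : EReal} {m r : ℝ} :
    (r : EReal) ≤ y - (m : EReal) ↔ ((r + m : ℝ) : EReal) ≤ y := by
  rw [EReal.le_sub_iff_add_le (by simp) (by simp), EReal.coe_add]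

theorem EConvexOn.le_coe {f : X → EReal} (hf : EConvexOn f) {x y : X} {a b s t : ℝ}
    (ha : 0 ≤ a) (hb : 0 ≤ b) (hab : a + b = 1) (hx : f x ≤ s) (hy : f y ≤ t) :
    f (a • x + b • y) ≤ ((a * s + b * t : ℝ) : EReal) := by
  refine (hf x y a b ha hb hab).trans ?_
  rw [EReal.coe_add, EReal.coe_mul, EReal.coe_mul]
  have ha' : (0 : EReal) ≤ a := by exact_mod_cast ha
  have hb' : (0 : EReal) ≤ b := by exact_mod_cast hb
  exact add_le_add (mul_le_mul_of_nonneg_left hx ha') (mul_le_mul_of_nonneg_left hy hb')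

theorem EConvexOn.le_of_localMin {f : X → EReal} (hf : EConvexOn f) (hbot : ∀ x, f x ≠ ⊥)
    {x₀ : X} {m : ℝ} (hm : f x₀ = m) (hmin : ∃ U ∈ 𝓝 x₀, ∀ x ∈ U, f x₀ ≤ f x) (x : X) :
    f x₀ ≤ f x := by
  by_contra! hlt
  obtain ⟨U, hU, hmin⟩ := hmin
  have hxt : f x ≠ ⊤ := (hlt.trans_le le_top).ne
  lift f x to ℝ using ⟨hxt, hbot x⟩ with s hs
  have hsm : s < m := by rw [hm] at hlt; exact_mod_cast hlt
  have hcont : Tendsto (fun b : ℝ => (1 - b) • x₀ + b • x) (𝓝[>] 0) (𝓝 x₀) := by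
    have : ContinuousAt (fun b : ℝ => (1 - b) • x₀ + b • x) 0 := by fun_prop
    have h2 := this.tendsto
    simp only [sub_zero, one_smul, zero_smul, add_zero] at h2
    exact h2.mono_left nhdsWithin_le_nhds
  have h1 : ∀ᶠ b : ℝ in 𝓝[>] 0, b < 1 :=
    (Iio_mem_nhds (zero_lt_one' ℝ)) |> fun h => mem_nhdsWithin_of_mem_nhds h
  obtain ⟨b, hbU, hb1, hb0⟩ := ((hcont.eventually hU).and (h1.and self_mem_nhdsWithin)).exists
  have hb0' : 0 < b := hb0
  have h3 := (hmin _ hbU).trans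
    (hf.le_coe (by linarith : 0 ≤ 1 - b) hb0'.le (by ring) hm.le hs.symm.le)
  rw [hm] at h3
  have h4 : m ≤ (1 - b) * m + b * s := by exact_mod_cast h3
  nlinarith

/-- Since `f x₀` is finite, a subgradient at `x` forces `f x` to be finite (in `EReal`, `m - ⊤ = ⊥`),
so the subgradient inequality tested at `x₀` holds over the reals. -/
theorem subdiff_test {f : X → EReal} (hbot : ∀ x, f x ≠ ⊥) {x₀ x : X} {m : ℝ}
    (hm : f x₀ = m) {xs : X →L[ℝ] ℝ} (h : xs ∈ subdiff f x) :
    ∃ s : ℝ, f x = s ∧ s - m ≤ xs (x - x₀) := by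
  have h0 := h x₀
  have hxt : f x ≠ ⊤ := by
    intro ht
    rw [ht, hm, EReal.sub_top, le_bot_iff] at h0
    exact EReal.coe_ne_bot _ h0
  lift f x to ℝ using ⟨hxt, hbot x⟩ with s hs
  refine ⟨s, rfl, ?_⟩
  rw [hm, ← EReal.coe_sub] at h0
  have h1 : xs (x₀ - x) ≤ m - s := by exact_mod_cast h0
  have h2 : xs (x₀ - x) = - xs (x - x₀) := by rw [← map_neg, neg_sub]
  linarith

/-! ### Sharpness implies definiteness -/

/-- A sharp minimizer of order `q + 1` makes `D_q ∂f` positively definite with the same modulus: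
the subgradient inequality at `x₀ + t u`, tested at `x₀`, bounds `f (x₀ + t u) - f x₀` above by
`t ^ (q + 1) ⟨v, u⟩`, and sharpness bounds it below. -/
theorem posDefWith_of_sharp {q : ℝ} (hq : 0 < q) {f : X → EReal} (hbot : ∀ x, f x ≠ ⊥)
    {x₀ : X} {m : ℝ} (hm : f x₀ = m) {ρ : ℝ} (hs : SharpMinWith (q + 1) ρ f x₀) :
    PosDefWith q ρ (gder q (subdiff f) x₀ 0) := by
  rintro x xs ⟨u, v, t, hu, hv, ht0, ht, hmem⟩
  obtain ⟨U, hU, hs⟩ := hs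
  have hlim : Tendsto (fun k => x₀ + t k • u k) atTop (𝓝 x₀) := by
    have := (ht.smul hu).const_add x₀
    simpa using this
  have hL : Tendsto (fun k => ρ * ‖u k‖ ^ (q + 1)) atTop (𝓝 (ρ * ‖x‖ ^ (q + 1))) :=
    ((hu.norm.rpow_const (Or.inr (by linarith))).const_mul ρ)
  have hR : Tendsto (fun k => v k (u k)) atTop (𝓝 (xs x)) :=
    (isBoundedBilinearMap_apply.continuous.tendsto (xs, x)).comp (hv.prodMk_nhds hu)
  refine le_of_tendsto_of_tendsto hL hR ?_
  filter_upwards [hlim.eventually hU] with k hk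
  obtain ⟨s, hfs, hle⟩ := subdiff_test hbot hm (hmem k)
  have h1 := hs _ hk
  rw [hfs, hm, ← EReal.coe_sub, EReal.coe_le_coe_iff] at h1
  have htk := ht0 k
  simp only [add_sub_cancel_left, zero_add, norm_smul, Real.norm_eq_abs, abs_of_pos htk,
    map_smul, _root_.smul_apply, smul_eq_mul] at h1 hle
  rw [Real.mul_rpow htk.le (norm_nonneg _), Real.rpow_add_one htk.ne'] at h1
  have hp : 0 < t k ^ q * t k := mul_pos (Real.rpow_pos_of_pos htk q) htk
  refine le_of_mul_le_mul_left ?_ hp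
  linarith

/-! ### Existence of small subgradients -/

/-- If `x` minimizes `f + κ ‖· - x‖`, then `f` has at `x` a subgradient of norm at most `κ`.
It is obtained by separating the epigraph of `u ↦ f (x + u) - f x` from the open strict
hypograph of `u ↦ -κ ‖u‖`. -/
theorem exists_subgradient {f : X → EReal} (hf : EConvexOn f)
    {x : X} {s κ : ℝ} (hs : f x = s) (hκ : 0 ≤ κ)
    (hmin : ∀ u, ((s - κ * ‖u - x‖ : ℝ) : EReal) ≤ f u) :
    ∃ xs ∈ subdiff f x, ‖xs‖ ≤ κ := by
  set A : Set (X × ℝ) := {p | f (x + p.1) ≤ ((s + p.2 : ℝ) : EReal)} with hA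
  set B : Set (X × ℝ) := {p | p.2 < -κ * ‖p.1‖} with hB
  have hAc : Convex ℝ A := by
    intro p hp r hr a b ha hb hab
    have h := hf.le_coe ha hb hab hp hr
    have e1 : a • (x + p.1) + b • (x + r.1) = x + (a • p + b • r).1 := by
      simp only [Prod.fst_add, Prod.smul_fst, smul_add]
      rw [add_add_add_comm, ← add_smul, hab, one_smul]
    have e2 : a * (s + p.2) + b * (s + r.2) = s + (a • p + b • r).2 := by
      simp only [Prod.snd_add, Prod.smul_snd, smul_eq_mul]
      linear_combination s * hab
    rw [e1, e2] at h
    exact h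
  have hBo : IsOpen B := isOpen_lt (by fun_prop) (by fun_prop)
  have hBc : Convex ℝ B := by
    intro p hp r hr a b ha hb hab
    have hp' : p.2 < -κ * ‖p.1‖ := hp
    have hr' : r.2 < -κ * ‖r.1‖ := hr
    have hn : ‖a • p.1 + b • r.1‖ ≤ a * ‖p.1‖ + b * ‖r.1‖ := by
      refine (norm_add_le _ _).trans_eq ?_
      rw [norm_smul, norm_smul, Real.norm_of_nonneg ha, Real.norm_of_nonneg hb]
    have hn' := mul_le_mul_of_nonneg_left hn hκ
    change a * p.2 + b * r.2 < -κ * ‖a • p.1 + b • r.1‖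
    have hlt : a * p.2 + b * r.2 < a * (-κ * ‖p.1‖) + b * (-κ * ‖r.1‖) := by
      rcases ha.eq_or_lt with h0 | h0
      · have hb1 : b = 1 := by linarith
        subst h0; subst hb1; linarith
      · exact add_lt_add_of_lt_of_le (mul_lt_mul_of_pos_left hp' h0)
          (mul_le_mul_of_nonneg_left hr'.le hb)
    linarith
  have hdisj : Disjoint B A := by
    rw [Set.disjoint_left]
    intro p hpB hpA
    have hpB' : p.2 < -κ * ‖p.1‖ := hpB
    have h := (hmin (x + p.1)).trans hpA
    rw [add_sub_cancel_left, EReal.coe_le_coe_iff] at h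
    linarith
  obtain ⟨φ, c, hφB, hφA⟩ := geometric_hahn_banach_open hBc hBo hAc hdisj
  set β : ℝ := φ (0, 1) with hβ
  set g : X →L[ℝ] ℝ := φ.comp (ContinuousLinearMap.inl ℝ X ℝ) with hg
  have hφ : ∀ u r, φ (u, r) = g u + β * r := by
    intro u r
    have : ((u, r) : X × ℝ) = (u, 0) + r • (0, 1) := by simp
    rw [this, map_add, map_smul, smul_eq_mul, mul_comm]
    rfl
  have hc0 : c ≤ 0 := by
    have := hφA (0, 0) (by simp [hA, hs])
    simpa [hφ] using this
  have hBneg : ∀ u : X, ∀ ε > 0, g u + β * (-κ * ‖u‖ - ε) < c := by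
    intro u ε hε
    have := hφB (u, -κ * ‖u‖ - ε) (by simp [hB, hε])
    rwa [hφ] at this
  have hβpos : 0 < β := by
    have := hBneg 0 1 one_pos
    simp at this
    linarith
  have hcnn : 0 ≤ c := by
    refine le_of_forall_pos_le_add fun ε hε => ?_
    have := hBneg 0 (ε / β) (by positivity)
    simp at this
    have h2 : β * (ε / β) = ε := by field_simp
    linarith
  have hgle : ∀ u : X, g u ≤ β * κ * ‖u‖ := by
    intro u
    refine le_of_forall_pos_le_add fun ε hε => ?_
    have := hBneg u (ε / β) (by positivity)
    have h2 : β * (ε / β) = ε := by field_simp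
    linarith
  refine ⟨(-β⁻¹) • g, ?_, ?_⟩
  · intro u
    rw [hs, coe_le_sub_coe_iff]
    refine EReal.le_of_forall_lt_iff_le.1 fun r hr => ?_
    have h := hφA (u - x, r - s) (by
      change f (x + (u - x)) ≤ ((s + (r - s) : ℝ) : EReal)
      rw [add_sub_cancel, add_sub_cancel]
      exact hr.le)
    rw [hφ] at h
    rw [EReal.coe_le_coe_iff]
    simp only [_root_.smul_apply, smul_eq_mul]
    have h2 : 0 ≤ β⁻¹ * (g (u - x) + β * (r - s)) :=
      mul_nonneg (inv_nonneg.2 hβpos.le) (by linarith)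
    rw [mul_add, inv_mul_cancel_left₀ hβpos.ne'] at h2
    linarith
  · refine ContinuousLinearMap.opNorm_le_bound _ hκ fun u => ?_
    have habs : |g u| ≤ β * κ * ‖u‖ := by
      rw [abs_le]
      have := hgle (-u)
      rw [map_neg, norm_neg] at this
      exact ⟨by linarith, hgle u⟩
    rw [_root_.smul_apply, norm_smul, norm_neg, norm_inv, Real.norm_of_nonneg hβpos.le,
      Real.norm_eq_abs]
    calc β⁻¹ * |g u| ≤ β⁻¹ * (β * κ * ‖u‖) := by gcongr
      _ = κ * ‖u‖ := by field_simp

/-- In finite dimensions, if `f x ≤ inf f + κ R`, then within distance `R` of `x` there is a point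
carrying a subgradient of norm at most `κ`: a minimizer of `f + κ ‖· - x‖` over the ball. -/
theorem exists_near_subgradient [FiniteDimensional ℝ X] {f : X → EReal}
    (hlsc : LowerSemicontinuous f) (hf : EConvexOn f) (hbot : ∀ x, f x ≠ ⊥)
    {m s κ R : ℝ} {x : X} (hm : ∀ u, (m : EReal) ≤ f u) (hs : f x = s)
    (hκ : 0 ≤ κ) (hR : 0 ≤ R) (hle : s ≤ m + κ * R) :
    ∃ z, ‖z - x‖ ≤ R ∧ ∃ xs ∈ subdiff f z, ‖xs‖ ≤ κ := by
  have : ProperSpace X := FiniteDimensional.proper ℝ X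
  set h : X → EReal := fun u => f u + ((κ * ‖u - x‖ : ℝ) : EReal) with hh
  have hl : LowerSemicontinuous h := by
    refine hlsc.add' (Continuous.lowerSemicontinuous
      (continuous_coe_real_ereal.comp (by fun_prop))) fun u => ?_
    exact EReal.continuousAt_add (Or.inr (EReal.coe_ne_bot _)) (Or.inl (hbot u))
  obtain ⟨z, hz, hzmin⟩ := LowerSemicontinuousOn.exists_isMinOn (s := Metric.closedBall x R)
    ⟨x, Metric.mem_closedBall_self hR⟩ (isCompact_closedBall x R) (hl.lowerSemicontinuousOn _)
  have hzR : ‖z - x‖ ≤ R := by simpa [dist_eq_norm] using hz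
  have hzx : h z ≤ s := by
    have := hzmin (Metric.mem_closedBall_self hR)
    simpa [hh, hs] using this
  have hglob : ∀ u, h z ≤ h u := by
    intro u
    by_cases hu : ‖u - x‖ ≤ R
    · exact hzmin (by simpa [dist_eq_norm] using hu)
    · refine hzx.trans ?_
      push Not at hu
      have h1 : ((m + κ * ‖u - x‖ : ℝ) : EReal) ≤ h u := by
        rw [EReal.coe_add]
        exact add_le_add (hm u) le_rfl
      refine le_trans ?_ h1
      rw [EReal.coe_le_coe_iff]
      have := mul_le_mul_of_nonneg_left hu.le hκ
      linarith
  have hzt : f z ≠ ⊤ := by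
    intro ht
    simp only [hh, ht, EReal.top_add_coe, top_le_iff] at hzx
    exact EReal.coe_ne_top _ hzx
  lift f z to ℝ using ⟨hzt, hbot z⟩ with w hw
  refine ⟨z, hzR, exists_subgradient hf hw.symm hκ fun u => ?_⟩
  have h1 := hglob u
  by_cases hut : f u = ⊤
  · rw [hut]; exact le_top
  simp only [hh, ← hw] at h1
  lift f u to ℝ using ⟨hut, hbot u⟩ with y hy
  rw [← EReal.coe_add, ← EReal.coe_add, EReal.coe_le_coe_iff] at h1
  rw [EReal.coe_le_coe_iff]
  have h2 : ‖u - x‖ ≤ ‖u - z‖ + ‖z - x‖ := norm_sub_le_norm_sub_add_norm_sub _ _ _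
  have h3 := mul_le_mul_of_nonneg_left h2 hκ
  linarith

/-! ### Definiteness implies sharpness -/

/-- Positive definiteness of `D_q F (x₀, 0)` with modulus `l` forces, in finite dimensions,
`‖x*‖ ≥ τ ‖x - x₀‖ ^ q` for all `x* ∈ F x` with `x` near `x₀`, whenever `τ < l`: along a violating
sequence the rescaled pairs are bounded and accumulate at a graph point violating definiteness. -/
theorem strongly_subregular {q : ℝ} (hq : 0 < q) [FiniteDimensional ℝ X]
    {F : X → Set (X →L[ℝ] ℝ)} {x₀ : X} {l τ : ℝ} (hτl : τ < l)
    (hpd : PosDefWith q l (gder q F x₀ 0)) :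
    ∃ δ > 0, ∀ x, ‖x - x₀‖ < δ → ∀ xs ∈ F x, τ * ‖x - x₀‖ ^ q ≤ ‖xs‖ := by
  by_contra! hcon
  choose x hx xs hxs hlt using fun n : ℕ => hcon (1 / ((n : ℝ) + 1)) Nat.one_div_pos_of_nat
  have hne : ∀ n, 0 < ‖x n - x₀‖ := by
    intro n
    rcases (norm_nonneg (x n - x₀)).eq_or_lt with h | h
    · have := hlt n
      rw [← h, Real.zero_rpow hq.ne', mul_zero] at this
      exact absurd this (norm_nonneg _).not_gt
    · exact h
  set t : ℕ → ℝ := fun n => ‖x n - x₀‖ with ht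
  have ht0 : Tendsto t atTop (𝓝 0) :=
    squeeze_zero (fun n => norm_nonneg _) (fun n => (hx n).le) tendsto_one_div_add_atTop_nhds_zero_nat
  set u : ℕ → X := fun n => (t n)⁻¹ • (x n - x₀) with hu
  set v : ℕ → (X →L[ℝ] ℝ) := fun n => (t n ^ q)⁻¹ • xs n with hv
  have hun : ∀ n, ‖u n‖ = 1 := by
    intro n
    have := (hne n).ne'
    simp only [hu, ht, norm_smul, norm_inv, norm_norm]
    exact inv_mul_cancel₀ this
  have hvn : ∀ n, ‖v n‖ ≤ τ := by
    intro n
    have hp : 0 < t n ^ q := Real.rpow_pos_of_pos (hne n) q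
    simp only [hv, norm_smul, norm_inv, Real.norm_of_nonneg hp.le]
    rw [inv_mul_le_iff₀ hp, mul_comm]
    exact (hlt n).le
  have : ProperSpace X := FiniteDimensional.proper ℝ X
  have : ProperSpace (X →L[ℝ] ℝ) := FiniteDimensional.proper ℝ _
  obtain ⟨⟨a, b⟩, hab, φ, hφ, hlim⟩ :=
    ((isCompact_sphere (0 : X) 1).prod (isCompact_closedBall (0 : X →L[ℝ] ℝ) τ)).tendsto_subseq
      (x := fun n => (u n, v n)) (fun n => ⟨by simp [hun], by simpa using hvn n⟩)
  have hmem : b ∈ gder q F x₀ 0 a := by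
    refine ⟨u ∘ φ, v ∘ φ, t ∘ φ, (continuous_fst.tendsto _).comp hlim,
      (continuous_snd.tendsto _).comp hlim, fun k => hne _, ht0.comp hφ.tendsto_atTop,
      fun k => ?_⟩
    have hp : 0 < t (φ k) ^ q := Real.rpow_pos_of_pos (hne _) q
    simp only [Function.comp, hu, hv, smul_smul, mul_inv_cancel₀ hp.ne', one_smul, zero_add]
    rw [show t (φ k) * (t (φ k))⁻¹ = 1 from mul_inv_cancel₀ (hne _).ne', one_smul, add_sub_cancel]
    exact hxs _
  have ha : ‖a‖ = 1 := by simpa using hab.1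
  have hb : ‖b‖ ≤ τ := by simpa using hab.2
  have h1 := hpd a b hmem
  have h2 := (le_abs_self _).trans (b.le_opNorm a)
  rw [ha, Real.one_rpow] at h1
  rw [ha] at h2
  linarith

/-- The factor `q ^ q / (q + 1) ^ (q + 1)` is `α (1 - α) ^ q` at its maximizer `α = 1 / (q + 1)`,
where `α` is the radius, relative to `‖x - x₀‖`, of the ball around `x` in which the subgradient
is found. -/
theorem sharp_of_posDefWith {q : ℝ} (hq : 0 < q) [FiniteDimensional ℝ X] {f : X → EReal}
    (hbot : ∀ x, f x ≠ ⊥) (hlsc : LowerSemicontinuous f) (hf : EConvexOn f)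
    {x₀ : X} {m : ℝ} (hm : f x₀ = m) (hmin : ∀ x, f x₀ ≤ f x) {l τ : ℝ} (hτl : τ < l)
    (hpd : PosDefWith q l (gder q (subdiff f) x₀ 0)) :
    SharpMinWith (q + 1) (q ^ q / (q + 1) ^ (q + 1) * τ) f x₀ := by
  obtain ⟨δ, hδ, hreg⟩ := strongly_subregular hq hτl hpd
  refine ⟨Metric.ball x₀ (δ / 2), Metric.ball_mem_nhds _ (by positivity), fun x hx => ?_⟩
  rw [mem_ball_iff_norm] at hx
  rw [hm, coe_le_sub_coe_iff]
  by_contra! hlt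
  have hxt : f x ≠ ⊤ := (hlt.trans_le le_top).ne
  obtain ⟨s, hs⟩ : ∃ s : ℝ, f x = s := ⟨_, (EReal.coe_toReal hxt (hbot x)).symm⟩
  rw [hs, EReal.coe_lt_coe_iff] at hlt
  have hms : m ≤ s := by
    have := hmin x
    rw [hm, hs] at this
    exact_mod_cast this
  have hr : 0 < ‖x - x₀‖ := by
    rcases (norm_nonneg (x - x₀)).eq_or_lt with h | h
    · rw [← h, Real.zero_rpow (by linarith), mul_zero] at hlt
      linarith
    · exact h
  set r := ‖x - x₀‖ with hrdef
  have hq1 : 0 < q + 1 := by linarith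
  set R := r / (q + 1) with hRdef
  have hR : 0 < R := by positivity
  obtain ⟨z, hzR, xs, hxs, hn⟩ := exists_near_subgradient (κ := (s - m) / R) (R := R) (m := m)
    hlsc hf hbot (fun u => hm ▸ hmin u) hs (div_nonneg (by linarith) hR.le) hR.le
    (by rw [div_mul_cancel₀ _ hR.ne']; linarith)
  have hRr : R < r := div_lt_self hr (by linarith)
  have hup : ‖z - x₀‖ < δ := by
    have : ‖z - x₀‖ ≤ ‖z - x‖ + ‖x - x₀‖ := norm_sub_le_norm_sub_add_norm_sub _ _ _
    linarith
  have hlow : q / (q + 1) * r ≤ ‖z - x₀‖ := by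
    have h1 : ‖x - x₀‖ ≤ ‖x - z‖ + ‖z - x₀‖ := norm_sub_le_norm_sub_add_norm_sub _ _ _
    rw [norm_sub_rev x z] at h1
    have h2 : q / (q + 1) * r = r - R := by rw [hRdef]; field_simp; ring
    linarith
  have hreg' := (hreg z hup xs hxs).trans hn
  have hτ : 0 < τ := by
    by_contra! h
    have h1 : 0 ≤ q ^ q / (q + 1) ^ (q + 1) * r ^ (q + 1) := by positivity
    have := mul_nonpos_of_nonneg_of_nonpos h1 h
    nlinarith
  have h1 : τ * (q / (q + 1) * r) ^ q ≤ (s - m) / R := by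
    refine le_trans ?_ hreg'
    gcongr
  rw [le_div_iff₀ hR] at h1
  have h2 : τ * (q / (q + 1) * r) ^ q * R = q ^ q / (q + 1) ^ (q + 1) * τ * r ^ (q + 1) := by
    rw [Real.mul_rpow (by positivity) hr.le, Real.div_rpow hq.le hq1.le,
      Real.rpow_add_one hr.ne', Real.rpow_add_one hq1.ne', hRdef]
    field_simp
  linarith

/-! ### The modulus of definiteness -/

theorem ofReal_le_starNorm_iff {q l : ℝ} (hq : 0 < q) (hl : 0 < l) (H : X → Set (X →L[ℝ] ℝ)) :
    ENNReal.ofReal l ≤ starNorm q H ↔ PosDefWith q l H := by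
  have key : ∀ (x : X) (xs : X →L[ℝ] ℝ), x ≠ 0 →
      (ENNReal.ofReal l ≤ ENNReal.ofReal (xs x) / ENNReal.ofReal (‖x‖ ^ (q + 1)) ↔
        l * ‖x‖ ^ (q + 1) ≤ xs x) := by
    intro x xs hx
    have hp : 0 < ‖x‖ ^ (q + 1) := Real.rpow_pos_of_pos (norm_pos_iff.2 hx) _
    rw [ENNReal.le_div_iff_mul_le (by simp [hp]) (by simp), ← ENNReal.ofReal_mul hl.le,
      ENNReal.ofReal_le_ofReal_iff']
    have : 0 < l * ‖x‖ ^ (q + 1) := by positivity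
    constructor
    · rintro (h | h)
      · exact h
      · linarith
    · exact Or.inl
  simp only [starNorm, le_iInf_iff]
  constructor
  · intro h x xs hxs
    by_cases hx : x = 0
    · subst hx
      rw [norm_zero, Real.zero_rpow (by linarith)]
      simp
    · exact (key x xs hx).1 (h (x, xs) ⟨hxs, hx⟩)
  · rintro h ⟨x, xs⟩ ⟨hxs, hx⟩
    exact (key x xs hx).2 (h x xs hxs)

/-- for a lower semicontinuous convex `f` on a Banach space with local
minimizer `x₀`: (a) if `x₀` is a `(q+1)`-order sharp minimizer with modulus `ρ > 0`, then
`D_q ∂f(x₀, 0)` is `q`-order positively definite with modulus `ρ`; (b) in finite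
dimensions, if `D_q ∂f(x₀, 0)` is `q`-order positively definite with modulus `l > 0`,
then for any `τ ∈ (0, l)`, `x₀` is a `(q+1)`-order sharp minimizer with modulus
`q^q/(q+1)^(q+1)·τ`; consequently, in finite dimensions, `x₀` is a `(q+1)`-order sharp
minimizer iff `D_q ∂f(x₀, 0)` is `q`-order positively definite, and
`q^q/(q+1)^(q+1)·‖D_q ∂f(x₀,0)‖*_q ≤ shrp_{q+1} f(x₀) ≤ ‖D_q ∂f(x₀,0)‖*_q`. -/
theorem stmt16 [CompleteSpace X] (q : ℝ) (hq : 0 < q)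
    (f : X → EReal) (hbot : ∀ x, f x ≠ ⊥)
    (hlsc : LowerSemicontinuous f) (hconv : EConvexOn f)
    (x₀ : X) (hx₀ : f x₀ ≠ ⊤)
    (hmin : ∃ U ∈ 𝓝 x₀, ∀ x ∈ U, f x₀ ≤ f x) :
    (∀ ρ : ℝ, 0 < ρ → SharpMinWith (q + 1) ρ f x₀ →
      PosDefWith q ρ (gder q (subdiff f) x₀ 0)) ∧
    (FiniteDimensional ℝ X →
      (∀ l : ℝ, 0 < l → PosDefWith q l (gder q (subdiff f) x₀ 0) →
        ∀ τ : ℝ, 0 < τ → τ < l →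
          SharpMinWith (q + 1) (q ^ q / (q + 1) ^ (q + 1) * τ) f x₀) ∧
      ((∃ ρ > 0, SharpMinWith (q + 1) ρ f x₀) ↔
        (∃ l > 0, PosDefWith q l (gder q (subdiff f) x₀ 0))) ∧
      ENNReal.ofReal (q ^ q / (q + 1) ^ (q + 1)) * starNorm q (gder q (subdiff f) x₀ 0) ≤
        shrpMod (q + 1) f x₀ ∧
      shrpMod (q + 1) f x₀ ≤ starNorm q (gder q (subdiff f) x₀ 0)) := by
  obtain ⟨m, hm⟩ : ∃ m : ℝ, f x₀ = m := ⟨_, (EReal.coe_toReal hx₀ (hbot x₀)).symm⟩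
  have hglob := hconv.le_of_localMin hbot hm hmin
  have ha : ∀ ρ : ℝ, 0 < ρ → SharpMinWith (q + 1) ρ f x₀ →
      PosDefWith q ρ (gder q (subdiff f) x₀ 0) := fun ρ _ h => posDefWith_of_sharp hq hbot hm h
  refine ⟨ha, fun hfin => ?_⟩
  have hb : ∀ l : ℝ, 0 < l → PosDefWith q l (gder q (subdiff f) x₀ 0) →
      ∀ τ : ℝ, 0 < τ → τ < l → SharpMinWith (q + 1) (q ^ q / (q + 1) ^ (q + 1) * τ) f x₀ :=
    fun l _ h τ _ hτl => sharp_of_posDefWith hq hbot hlsc hconv hm hglob hτl h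
  have hc : 0 < q ^ q / (q + 1) ^ (q + 1) := by positivity
  refine ⟨hb, ⟨fun ⟨ρ, hρ, h⟩ => ⟨ρ, hρ, ha ρ hρ h⟩, fun ⟨l, hl, h⟩ =>
    ⟨_, mul_pos hc (half_pos hl), hb l hl h _ (half_pos hl) (half_lt_self hl)⟩⟩, ?_, ?_⟩
  · rw [mul_comm, ← ENNReal.le_div_iff_mul_le (by simp [hc]) (by simp)]
    refine le_of_forall_lt fun a hlt => ?_
    obtain ⟨τ', haτ, hτl⟩ := exists_between hlt
    obtain ⟨l', hτl', hl⟩ := exists_between hτl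
    have hτt : τ' ≠ ⊤ := (hτl.trans_le le_top).ne
    have hlt' : l' ≠ ⊤ := (hl.trans_le le_top).ne
    have hτ0 : 0 < τ'.toReal := ENNReal.toReal_pos (bot_le.trans_lt haτ).ne' hτt
    have hlt2 : τ'.toReal < l'.toReal := (ENNReal.toReal_lt_toReal hτt hlt').2 hτl'
    have hpd : PosDefWith q l'.toReal (gder q (subdiff f) x₀ 0) := by
      rw [← ofReal_le_starNorm_iff hq (hτ0.trans hlt2), ENNReal.ofReal_toReal hlt']
      exact hl.le
    have hsh := hb _ (hτ0.trans hlt2) hpd _ hτ0 hlt2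
    refine haτ.trans_le ?_
    rw [ENNReal.le_div_iff_mul_le (by simp [hc]) (by simp), mul_comm,
      ← ENNReal.ofReal_toReal hτt, ← ENNReal.ofReal_mul hc.le]
    exact le_iSup₂_of_le _ ⟨mul_pos hc hτ0, hsh⟩ le_rfl
  · refine iSup₂_le fun ρ hρ => ?_
    exact (ofReal_le_starNorm_iff hq hρ.1 _).2 (ha ρ hρ.1 hρ.2)

end
end

section
/- Let X be a finite-dimensional normed space, q > 0, f : X → ℝ ∪ {+∞} lower semicontinuous and convex, and let x̄ ∈ dom f be a local minimizer of f. Then D_q ∂f(x̄, 0) is q-order positively definite if and only if ∂f is q-order strongly subregular at (x̄, 0), and ‖D_q ∂f(x̄, 0)‖*_q ≤ srg_q ∂f(x̄, 0) ≤ (q+1)^{q+1}/q^q · ‖D_q ∂f(x̄, 0)‖*_q. -/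
/-!
The lower bound needs no convexity: if strong subregularity with modulus `τ` fails, there are
`x_k → x₀` and `x_k* ∈ ∂f(x_k)` with `‖x_k*‖ < τ ‖x_k - x₀‖ ^ q`. Rescaling by
`t_k = ‖x_k - x₀‖` and passing to a convergent subsequence gives a unit vector `u` and
`v ∈ D_q ∂f(x₀, 0)(u)` with `⟨v, u⟩ ≤ τ` (`strSubreg_of_lt_starNorm`).

For the upper bound, strong subregularity with modulus `τ` implies the growth condition
`f x - f x₀ ≥ τ q ^ q / (q + 1) ^ (q + 1) * ‖x - x₀‖ ^ (q + 1)` near `x₀` (`growth_of_strSubreg`).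
If it failed at `x`, with `ρ = ‖x - x₀‖` and `f x - f x₀ < ε`, a minimizer `z` of
`f + K ‖· - x‖`, `K = ε (q + 1) / ρ`, would satisfy `‖z - x‖ ≤ ρ / (q + 1)` and carry a subgradient
of norm at most `K` (`exists_near_subgradient`, resting on the Hahn-Banach sum rule
`exists_small_subgradient`), which contradicts subregularity at `z`. Since
`⟨x*, x - x₀⟩ ≥ f x - f x₀` for `x* ∈ ∂f(x)`, the growth condition passes to the limit and makes
`D_q ∂f(x₀, 0)` positively definite with the same constant (`posDef_of_strSubreg`).
-/

noncomputable section

open Filter Topology Set Pointwise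
open scoped ENNReal RealInnerProductSpace

variable {X : Type*} {Y : Type*} [NormedAddCommGroup X] [NormedSpace ℝ X]
  [NormedAddCommGroup Y] [NormedSpace ℝ Y]

/-! ### Convex functions and their subgradients -/

/-- A subgradient exists only at points of the effective domain. -/
lemma ne_top_of_mem_subdiff {f : X → EReal} {x : X} {xs : X →L[ℝ] ℝ}
    (h : xs ∈ subdiff f x) : f x ≠ ⊤ := by
  intro hx
  have := h x
  rw [hx] at this
  simp at this

lemma subdiff_real {f : X → EReal} {x u : X} {xs : X →L[ℝ] ℝ} {r s : ℝ}
    (h : xs ∈ subdiff f x) (hu : f u = r) (hx : f x = s) : xs (u - x) ≤ r - s := by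
  have := h u
  rw [hu, hx] at this
  exact_mod_cast this

/-- By convexity a local minimizer is a global one. -/
lemma global_min {f : X → EReal} (hbot : ∀ x, f x ≠ ⊥) (hconv : EConvexOn f) {x₀ : X}
    (hx₀ : f x₀ ≠ ⊤) (hmin : ∃ U ∈ 𝓝 x₀, ∀ x ∈ U, f x₀ ≤ f x) (x : X) : f x₀ ≤ f x := by
  by_cases hx : f x = ⊤
  · rw [hx]; exact le_top
  obtain ⟨U, hU, hm⟩ := hmin
  have hc : Tendsto (fun t : ℝ => (1 - t) • x₀ + t • x) (𝓝[>] 0) (𝓝 x₀) := by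
    have : Continuous (fun t : ℝ => (1 - t) • x₀ + t • x) := by fun_prop
    have h2 := this.tendsto 0
    simp only [sub_zero, one_smul, zero_smul, add_zero] at h2
    exact h2.mono_left nhdsWithin_le_nhds
  have h1 : ∀ᶠ t : ℝ in 𝓝[>] 0, t < 1 := nhdsWithin_le_nhds (Iio_mem_nhds one_pos)
  obtain ⟨t, ht, ht1, ht0⟩ := ((hc.eventually hU).and (h1.and self_mem_nhdsWithin)).exists
  have ht0 : 0 < t := ht0
  have h3 := (hm _ ht).trans (hconv x₀ x (1 - t) t (by linarith) ht0.le (by ring))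
  lift f x₀ to ℝ using ⟨hx₀, hbot _⟩ with a
  lift f x to ℝ using ⟨hx, hbot _⟩ with b
  norm_cast at h3 ⊢
  nlinarith

/-- Subdifferential sum rule for `f + K ‖· - w‖`: at a minimizer `z` the function `f` has a
subgradient of norm at most `K`. The epigraph of `f` is separated from the strict hypograph of
the concave function `u ↦ f z + K ‖z - w‖ - K ‖u - w‖`. -/
lemma exists_small_subgradient {f : X → EReal} (hbot : ∀ x, f x ≠ ⊥) (hconv : EConvexOn f)
    {K : ℝ} (hK : 0 ≤ K) {w z : X} {m : ℝ} (hz : f z = m)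
    (hmin : ∀ (u : X) (r : ℝ), f u = r → m + K * ‖z - w‖ ≤ r + K * ‖u - w‖) :
    ∃ zs ∈ subdiff f z, ‖zs‖ ≤ K := by
  set A : Set (X × ℝ) := {p | f p.1 ≤ ((p.2 : ℝ) : EReal)} with hA
  set B : Set (X × ℝ) := {p | p.2 + K * ‖p.1 - w‖ < m + K * ‖z - w‖} with hB
  have hBo : IsOpen B := isOpen_lt (by fun_prop) (by fun_prop)
  have hBc : Convex ℝ B := by
    rintro ⟨u, r⟩ hu ⟨v, s⟩ hv a b ha hb hab
    simp only [hB, mem_ofPred_eq, Prod.smul_mk, Prod.mk_add_mk, smul_eq_mul] at hu hv ⊢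
    have h1 : ‖a • u + b • v - w‖ ≤ a * ‖u - w‖ + b * ‖v - w‖ := by
      have : a • u + b • v - w = a • (u - w) + b • (v - w) := by
        have : w = (a + b) • w := by rw [hab, one_smul]
        nth_rewrite 1 [this]
        module
      rw [this]
      refine (norm_add_le _ _).trans ?_
      rw [norm_smul, norm_smul, Real.norm_of_nonneg ha, Real.norm_of_nonneg hb]
    have h2 := mul_le_mul_of_nonneg_left h1 hK
    obtain rfl : b = 1 - a := by linarith
    rcases ha.eq_or_lt with rfl | ha
    · nlinarith
    · have := mul_lt_mul_of_pos_left hu ha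
      have := mul_le_mul_of_nonneg_left hv.le hb
      nlinarith
  have hAc : Convex ℝ A := by
    rintro ⟨u, r⟩ hu ⟨v, s⟩ hv a b ha hb hab
    simp only [hA, mem_ofPred_eq, Prod.smul_mk, Prod.mk_add_mk, smul_eq_mul] at hu hv ⊢
    have h := hconv u v a b ha hb hab
    have hut : f u ≠ ⊤ := fun h => by simp [h] at hu
    have hvt : f v ≠ ⊤ := fun h => by simp [h] at hv
    lift f u to ℝ using ⟨hut, hbot _⟩ with p
    lift f v to ℝ using ⟨hvt, hbot _⟩ with p'
    refine h.trans ?_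
    norm_cast at hu hv ⊢
    gcongr
  have hdisj : Disjoint B A := by
    rw [Set.disjoint_left]
    rintro ⟨u, r⟩ hb ha
    simp only [hA, hB, mem_ofPred_eq] at ha hb
    have hut : f u ≠ ⊤ := fun h => by simp [h] at ha
    obtain ⟨p, hp⟩ : ∃ p : ℝ, f u = p := ⟨(f u).toReal, (EReal.coe_toReal hut (hbot _)).symm⟩
    have := hmin u p hp
    rw [hp] at ha
    norm_cast at ha
    linarith
  obtain ⟨φ, s, h1, h2⟩ := geometric_hahn_banach_open hBc hBo hAc hdisj
  set ψ : X →L[ℝ] ℝ := φ.comp (ContinuousLinearMap.inl ℝ X ℝ) with hψ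
  set β : ℝ := φ (0, 1) with hβ
  have hφ : ∀ u r, φ (u, r) = ψ u + β * r := by
    intro u r
    have : ((u, r) : X × ℝ) = (u, 0) + r • (0, 1) := by simp
    rw [this, map_add, map_smul]
    simp [hψ, hβ, mul_comm]
  have hBm : ∀ u r, r + K * ‖u - w‖ < m + K * ‖z - w‖ → ψ u + β * r < s := fun u r h => by
    rw [← hφ]; exact h1 _ h
  have hAm : ∀ u (r : ℝ), f u = r → s ≤ ψ u + β * r := fun u r h => by
    rw [← hφ]; exact h2 _ h.le
  have hβ0 : 0 < β := by
    have a1 := hBm z (m - 1) (by linarith)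
    have a2 := hAm z m hz
    nlinarith
  -- the closed form of `hBm`, obtained by letting `r` increase to the value of the hypograph
  have hBm' : ∀ u, ψ u + β * (m + K * ‖z - w‖ - K * ‖u - w‖) ≤ s := by
    intro u
    refine le_of_forall_pos_le_add fun ε hε => ?_
    have := hBm u (m + K * ‖z - w‖ - K * ‖u - w‖ - ε / β) (by
      have : 0 < ε / β := by positivity
      linarith)
    have e : β * (ε / β) = ε := by field_simp
    nlinarith
  have hs : s = ψ z + β * m := by
    refine le_antisymm (hAm z m hz) ?_
    have := hBm' z
    nlinarith
  refine ⟨-(β⁻¹ • ψ), ?_, ?_⟩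
  · intro u
    rw [hz]
    by_cases hu : f u = ⊤
    · rw [hu]; simp
    obtain ⟨p, hp⟩ : ∃ p : ℝ, f u = p := ⟨(f u).toReal, (EReal.coe_toReal hu (hbot _)).symm⟩
    rw [hp]
    norm_cast
    have := hAm u p hp
    simp only [neg_apply, smul_apply, smul_eq_mul, map_sub]
    rw [hs] at this
    rw [← sub_nonneg]
    have e : p - m - (-(β⁻¹ * ψ u) - -(β⁻¹ * ψ z)) = β⁻¹ * (ψ u + β * p - (ψ z + β * m)) := by
      field_simp; ring
    rw [e]
    exact mul_nonneg (by positivity) (by linarith)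
  · have key : ∀ v, β⁻¹ * ψ v ≤ K * ‖v‖ := by
      intro v
      have := hBm' (z + v)
      rw [hs, map_add] at this
      have h3 : ‖z + v - w‖ ≤ ‖z - w‖ + ‖v‖ := by
        have : z + v - w = (z - w) + v := by abel
        rw [this]; exact norm_add_le _ _
      have h4 := mul_le_mul_of_nonneg_left (mul_le_mul_of_nonneg_left h3 hK) hβ0.le
      have h5 : ψ v ≤ β * (K * ‖v‖) := by nlinarith
      rw [inv_mul_le_iff₀ hβ0]
      exact h5
    refine ContinuousLinearMap.opNorm_le_bound _ hK fun v => ?_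
    rw [Real.norm_eq_abs, abs_le]
    have k1 := key v
    have k2 := key (-v)
    simp only [map_neg, norm_neg] at k2
    simp only [neg_apply, smul_apply, smul_eq_mul]
    constructor <;> linarith

/-- A finite-dimensional variational principle: if `f w` exceeds a lower bound `m` of `f` by
less than `ε`, then within `ε / K` of `w` there is a point with a subgradient of norm at most `K`. -/
lemma exists_near_subgradient_s17 [FiniteDimensional ℝ X] {f : X → EReal} (hbot : ∀ x, f x ≠ ⊥)
    (hlsc : LowerSemicontinuous f) (hconv : EConvexOn f) {m : ℝ} (hm : ∀ x, (m : EReal) ≤ f x)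
    {w : X} {p ε K : ℝ} (hw : f w = p) (hε : p - m < ε) (hK : 0 < K) :
    ∃ z, ‖z - w‖ ≤ ε / K ∧ ∃ zs ∈ subdiff f z, ‖zs‖ ≤ K := by
  have := FiniteDimensional.proper ℝ X
  have hmp : m ≤ p := by have := hm w; rw [hw] at this; exact_mod_cast this
  have hε0 : 0 < ε := by linarith
  have hlg : LowerSemicontinuous (fun u => f u + ((K * ‖u - w‖ : ℝ) : EReal)) := by
    refine LowerSemicontinuous.add' hlsc ?_ ?_
    · exact (continuous_coe_real_ereal.comp (by fun_prop)).lowerSemicontinuous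
    · intro x
      exact EReal.continuousAt_add (Or.inr (EReal.coe_ne_bot _)) (Or.inr (EReal.coe_ne_top _))
  obtain ⟨z, hzB, hz⟩ := (hlg.lowerSemicontinuousOn _).exists_isMinOn
    ⟨w, Metric.mem_closedBall_self (by positivity)⟩ (isCompact_closedBall w (ε / K))
  rw [Metric.mem_closedBall, dist_eq_norm] at hzB
  have hzw := hz (Metric.mem_closedBall_self (x := w) (ε := ε / K) (by positivity))
  simp only [mem_ofPred_eq, hw, sub_self, norm_zero, mul_zero, EReal.coe_zero, add_zero] at hzw
  have hzt : f z ≠ ⊤ := by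
    intro h
    rw [h, EReal.top_add_coe] at hzw
    exact absurd hzw (by simp)
  obtain ⟨n, hn⟩ : ∃ n : ℝ, f z = n := ⟨(f z).toReal, (EReal.coe_toReal hzt (hbot _)).symm⟩
  rw [hn] at hzw
  norm_cast at hzw
  refine ⟨z, hzB, exists_small_subgradient hbot hconv hK.le (w := w) hn fun u r hu => ?_⟩
  by_cases hub : ‖u - w‖ ≤ ε / K
  · have := hz (show u ∈ Metric.closedBall w (ε / K) by rwa [Metric.mem_closedBall, dist_eq_norm])
    simp only [mem_ofPred_eq, hu, hn] at this
    exact_mod_cast this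
  · -- outside the ball the penalty alone exceeds `f w - m`
    push Not at hub
    rw [div_lt_iff₀ hK] at hub
    have hmr : m ≤ r := by have := hm u; rw [hu] at this; exact_mod_cast this
    linarith

/-! ### From strong subregularity to positive definiteness -/

/-- Strong subregularity of order `q` with modulus `τ` forces growth of order `q + 1`. The optimal
constant comes from applying the variational principle with radius `‖x - x₀‖ / (q + 1)`, the choice
`α = 1 / (q + 1)` maximizing `α (1 - α) ^ q`. -/
lemma growth_of_strSubreg [FiniteDimensional ℝ X] {q : ℝ} (hq : 0 < q) {f : X → EReal}
    (hbot : ∀ x, f x ≠ ⊥) (hlsc : LowerSemicontinuous f) (hconv : EConvexOn f) {x₀ : X} {m : ℝ}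
    (hm : ∀ x, (m : EReal) ≤ f x) {τ : ℝ} (hτ : 0 < τ)
    (hreg : StrSubregWith q τ (subdiff f) x₀ 0) :
    ∀ᶠ x in 𝓝 x₀, ∀ r : ℝ, f x = r →
      τ / ((q + 1) ^ (q + 1) / q ^ q) * ‖x - x₀‖ ^ (q + 1) ≤ r - m := by
  obtain ⟨U, hU, V, hV, hUV⟩ := hreg
  obtain ⟨δ, hδ, hδU⟩ := Metric.mem_nhds_iff.1 hU
  obtain ⟨η, hη, hηV⟩ := Metric.mem_nhds_iff.1 hV
  set c := τ / ((q + 1) ^ (q + 1) / q ^ q) with hc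
  have hc0 : 0 < c := by positivity
  -- points so close to `x₀` that the subgradient produced below lies in `V`
  have hsmall : ∀ᶠ x in 𝓝 x₀, c * (q + 1) * ‖x - x₀‖ ^ q < η := by
    have hcont : Continuous fun x : X => c * (q + 1) * ‖x - x₀‖ ^ q :=
      continuous_const.mul ((continuous_id.sub continuous_const).norm.rpow_const
        fun _ => Or.inr hq.le)
    have := hcont.tendsto x₀
    simp only [sub_self, norm_zero, Real.zero_rpow hq.ne', mul_zero] at this
    exact this.eventually (Iio_mem_nhds hη)
  filter_upwards [hsmall, Metric.ball_mem_nhds x₀ (half_pos hδ)] with x hxη hxδ r hr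
  rw [Metric.mem_ball, dist_eq_norm] at hxδ
  by_contra! hlt
  set ρ := ‖x - x₀‖ with hρ
  have hmr : m ≤ r := by have := hm x; rw [hr] at this; exact_mod_cast this
  have hρ0 : 0 < ρ := by
    rcases (norm_nonneg (x - x₀)).eq_or_lt with h | h
    · rw [← hρ] at h
      rw [← h, Real.zero_rpow (by linarith)] at hlt
      linarith
    · exact h
  obtain ⟨ε, hε1, hε2⟩ := exists_between hlt
  have hε0 : 0 < ε := by linarith
  obtain ⟨z, hzx, zs, hzs, hzsK⟩ := exists_near_subgradient_s17 hbot hlsc hconv hm hr hε1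
    (K := ε * (q + 1) / ρ) (by positivity)
  have hrad : ε / (ε * (q + 1) / ρ) = ρ / (q + 1) := by field_simp
  rw [hrad] at hzx
  have hpow : ρ ^ (q + 1) = ρ ^ q * ρ := by rw [Real.rpow_add hρ0, Real.rpow_one]
  have hKlt : ε * (q + 1) / ρ < c * (q + 1) * ρ ^ q := by
    rw [div_lt_iff₀ hρ0]
    rw [hpow] at hε2
    nlinarith
  have hzx' : ‖z - x‖ ≤ ρ := hzx.trans (div_le_self hρ0.le (by linarith))
  have hzU : z ∈ U := hδU <| by
    rw [Metric.mem_ball, dist_eq_norm]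
    have : ‖z - x₀‖ ≤ ‖z - x‖ + ‖x - x₀‖ := norm_sub_le_norm_sub_add_norm_sub _ _ _
    linarith
  have hzV : zs ∈ V := hηV <| by
    rw [Metric.mem_ball, dist_zero_right]
    linarith
  have hlow : q / (q + 1) * ρ ≤ ‖z - x₀‖ := by
    have h1 : ‖x - x₀‖ ≤ ‖x - z‖ + ‖z - x₀‖ := norm_sub_le_norm_sub_add_norm_sub _ _ _
    rw [norm_sub_rev x z] at h1
    have e : q / (q + 1) * ρ = ρ - ρ / (q + 1) := by field_simp; ring
    linarith
  have hd := (hUV z hzU).trans (Metric.infEDist_le_edist_of_mem ⟨hzs, hzV⟩)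
  rw [edist_dist, dist_zero_left, ENNReal.ofReal_le_ofReal_iff (norm_nonneg _)] at hd
  have h1 : τ * (q / (q + 1) * ρ) ^ q ≤ τ * ‖z - x₀‖ ^ q := by gcongr
  have h2 : τ * (q / (q + 1) * ρ) ^ q = c * (q + 1) * ρ ^ q := by
    rw [Real.mul_rpow (by positivity) hρ0.le, Real.div_rpow hq.le (by positivity), hc,
      Real.rpow_add (by positivity : 0 < q + 1), Real.rpow_one]
    have : 0 < q ^ q := by positivity
    have : 0 < (q + 1) ^ q := by positivity
    field_simp
  linarith

/-- Positive definiteness follows from the growth estimate, since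
`⟨x*, x - x₀⟩ ≥ f x - f x₀` for `x* ∈ ∂f(x)`, by passing to the limit. -/
lemma posDef_of_strSubreg [FiniteDimensional ℝ X] {q : ℝ} (hq : 0 < q) {f : X → EReal}
    (hbot : ∀ x, f x ≠ ⊥) (hlsc : LowerSemicontinuous f) (hconv : EConvexOn f) {x₀ : X} {m : ℝ}
    (hx₀ : f x₀ = m) (hm : ∀ x, (m : EReal) ≤ f x) {τ : ℝ} (hτ : 0 < τ)
    (hreg : StrSubregWith q τ (subdiff f) x₀ 0) :
    PosDefWith q (τ / ((q + 1) ^ (q + 1) / q ^ q)) (gder q (subdiff f) x₀ 0) := by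
  rintro x xs ⟨u, v, t, hu, hv, ht0, ht, hmem⟩
  have hgrow := growth_of_strSubreg hq hbot hlsc hconv hm hτ hreg
  have hlim : Tendsto (fun k => x₀ + t k • u k) atTop (𝓝 x₀) := by
    have := (ht.smul hu).const_add x₀
    simpa using this
  have hR : Tendsto (fun k => v k (u k)) atTop (𝓝 (xs x)) :=
    (isBoundedBilinearMap_apply.continuous.tendsto (xs, x)).comp (hv.prodMk_nhds hu)
  have hL : Tendsto (fun k => τ / ((q + 1) ^ (q + 1) / q ^ q) * ‖u k‖ ^ (q + 1)) atTop
      (𝓝 (τ / ((q + 1) ^ (q + 1) / q ^ q) * ‖x‖ ^ (q + 1))) :=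
    (hu.norm.rpow_const (Or.inr (by linarith))).const_mul _
  refine le_of_tendsto_of_tendsto hL hR ?_
  filter_upwards [hlim.eventually hgrow] with k hk
  have hk0 := ht0 k
  have hs := hmem k
  rw [zero_add] at hs
  obtain ⟨r, hr⟩ : ∃ r : ℝ, f (x₀ + t k • u k) = r :=
    ⟨_, (EReal.coe_toReal (ne_top_of_mem_subdiff hs) (hbot _)).symm⟩
  have h1 := hk r hr
  have h2 := subdiff_real hs hx₀ hr
  simp only [sub_add_cancel_left, map_neg, map_smul, smul_apply,
    smul_eq_mul] at h2
  rw [add_sub_cancel_left, norm_smul, Real.norm_of_nonneg hk0.le,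
    Real.mul_rpow hk0.le (norm_nonneg _)] at h1
  have hpow : t k ^ (q + 1) = t k ^ q * t k := by rw [Real.rpow_add hk0, Real.rpow_one]
  have hp : 0 < t k ^ (q + 1) := by positivity
  refine le_of_mul_le_mul_left ?_ hp
  calc _ = τ / ((q + 1) ^ (q + 1) / q ^ q) * (t k ^ (q + 1) * ‖u k‖ ^ (q + 1)) := by ring
    _ ≤ r - m := h1
    _ ≤ _ := by rw [hpow]; linarith

lemma le_starNorm_of_posDef {q l : ℝ} (hl : 0 < l) {H : X → Set (X →L[ℝ] ℝ)}
    (h : PosDefWith q l H) : ENNReal.ofReal l ≤ starNorm q H := by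
  refine le_iInf₂ fun p hp => ?_
  have hpos : 0 < ‖p.1‖ ^ (q + 1) := Real.rpow_pos_of_pos (norm_pos_iff.2 hp.2) _
  rw [ENNReal.le_div_iff_mul_le (Or.inl (ENNReal.ofReal_pos.2 hpos).ne')
    (Or.inl ENNReal.ofReal_ne_top), ← ENNReal.ofReal_mul hl.le]
  exact ENNReal.ofReal_le_ofReal (h _ _ hp.1)

/-! ### From positive definiteness to strong subregularity -/

/-- If strong subregularity with modulus `τ` fails, normalizing a sequence of witnesses and using
compactness yields a unit vector `u` and `v ∈ D_q F(x₀, 0)(u)` with `‖v‖ ≤ τ`. -/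
lemma strSubreg_of_lt_starNorm [FiniteDimensional ℝ X] {q : ℝ} (hq : 0 < q)
    {F : X → Set (X →L[ℝ] ℝ)} {x₀ : X} {τ : ℝ}
    (h : ENNReal.ofReal τ < starNorm q (gder q F x₀ 0)) : StrSubregWith q τ F x₀ 0 := by
  by_contra hcon
  have hwit : ∀ n : ℕ, ∃ (x : X) (xs : X →L[ℝ] ℝ), xs ∈ F x ∧ ‖x - x₀‖ < 1 / ((n : ℝ) + 1) ∧
      ‖xs‖ < τ * ‖x - x₀‖ ^ q ∧ ‖xs‖ < 1 / ((n : ℝ) + 1) := by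
    intro n
    have hn : (0 : ℝ) < 1 / ((n : ℝ) + 1) := by positivity
    by_contra! hno
    refine hcon ⟨_, Metric.ball_mem_nhds x₀ hn, _, Metric.ball_mem_nhds 0 hn, fun x hx => ?_⟩
    rw [Metric.mem_ball, dist_eq_norm] at hx
    refine Metric.le_infEDist.2 ?_
    rintro xs ⟨hxs, hV⟩
    rw [Metric.mem_ball, dist_zero_right] at hV
    rw [edist_dist, dist_zero_left]
    refine ENNReal.ofReal_le_ofReal ?_
    by_contra! hlt
    exact absurd hV (not_lt.2 (hno x xs hxs hx hlt))
  choose x xs hF hx hxs hxs0 using hwit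
  have ht0 : ∀ n, 0 < ‖x n - x₀‖ := by
    intro n
    refine (norm_nonneg _).lt_of_ne fun h0 => ?_
    have := hxs n
    rw [← h0, Real.zero_rpow hq.ne', mul_zero] at this
    exact absurd this (not_lt.2 (norm_nonneg _))
  have ht : Tendsto (fun n => ‖x n - x₀‖) atTop (𝓝 0) :=
    squeeze_zero (fun _ => norm_nonneg _) (fun n => (hx n).le) tendsto_one_div_add_atTop_nhds_zero_nat
  set u : ℕ → X := fun n => ‖x n - x₀‖⁻¹ • (x n - x₀) with hu
  set v : ℕ → (X →L[ℝ] ℝ) := fun n => (‖x n - x₀‖ ^ q)⁻¹ • xs n with hv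
  have hun : ∀ n, ‖u n‖ = 1 := fun n => by
    rw [hu]
    simp only [norm_smul, norm_inv, norm_norm]
    exact inv_mul_cancel₀ (ht0 n).ne'
  have hvn : ∀ n, ‖v n‖ ≤ τ := fun n => by
    have hp : 0 < ‖x n - x₀‖ ^ q := Real.rpow_pos_of_pos (ht0 n) q
    simp only [hv, norm_smul, norm_inv, Real.norm_of_nonneg hp.le]
    rw [inv_mul_le_iff₀ hp, mul_comm]
    exact (hxs n).le
  have := FiniteDimensional.proper ℝ X
  have := FiniteDimensional.proper ℝ (X →L[ℝ] ℝ)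
  obtain ⟨⟨a, b⟩, hab, φ, hφ, hlim⟩ :=
    ((isCompact_sphere (0 : X) 1).prod (isCompact_closedBall (0 : X →L[ℝ] ℝ) τ)).tendsto_subseq
      (x := fun n => (u n, v n)) fun n => ⟨by simp [hun n], by simpa using hvn n⟩
  have ha : ‖a‖ = 1 := by simpa using hab.1
  have hb : ‖b‖ ≤ τ := by simpa using hab.2
  have hmem : b ∈ gder q F x₀ 0 a := by
    refine ⟨u ∘ φ, v ∘ φ, fun n => ‖x (φ n) - x₀‖, (continuous_fst.tendsto _).comp hlim,
      (continuous_snd.tendsto _).comp hlim, fun k => ht0 _, ht.comp hφ.tendsto_atTop, fun k => ?_⟩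
    have hp : 0 < ‖x (φ k) - x₀‖ ^ q := Real.rpow_pos_of_pos (ht0 _) q
    simp only [hu, hv, Function.comp_apply]
    rw [smul_inv_smul₀ hp.ne', smul_inv_smul₀ (ht0 _).ne', zero_add, add_sub_cancel]
    exact hF _
  have hle : starNorm q (gder q F x₀ 0) ≤ _ :=
    iInf₂_le (a, b) ⟨hmem, fun h0 : a = 0 => by simp [h0] at ha⟩
  refine absurd (h.trans_le hle) (not_lt.2 ?_)
  simp only [ha, Real.one_rpow, ENNReal.ofReal_one, div_one]
  refine ENNReal.ofReal_le_ofReal ?_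
  have := b.le_opNorm a
  rw [ha, mul_one] at this
  exact (le_abs_self _).trans (this.trans hb)

lemma starNorm_le_srgMod [FiniteDimensional ℝ X] {q : ℝ} (hq : 0 < q)
    (F : X → Set (X →L[ℝ] ℝ)) (x₀ : X) :
    starNorm q (gder q F x₀ 0) ≤ srgMod q F x₀ 0 := by
  refine le_of_forall_lt fun s hs => ?_
  obtain ⟨s', hs1, hs2⟩ := exists_between hs
  have hfin : s' ≠ ⊤ := hs2.ne_top
  have hpos : 0 < s'.toReal := ENNReal.toReal_pos (bot_le.trans_lt hs1).ne' hfin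
  have hreg : StrSubregWith q s'.toReal F x₀ 0 :=
    strSubreg_of_lt_starNorm hq (by rwa [ENNReal.ofReal_toReal hfin])
  have hle : ENNReal.ofReal s'.toReal ≤ srgMod q F x₀ 0 :=
    le_iSup₂ (f := fun (τ : ℝ) (_ : 0 < τ ∧ StrSubregWith q τ F x₀ 0) => ENNReal.ofReal τ)
      s'.toReal ⟨hpos, hreg⟩
  rw [ENNReal.ofReal_toReal hfin] at hle
  exact hs1.trans_le hle

/-- in finite dimensions, for a lower semicontinuous convex `f` with local
minimizer `x₀`: `D_q ∂f(x₀, 0)` is `q`-order positively definite iff `∂f` is `q`-order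
strongly subregular at `(x₀, 0)`, and
`‖D_q ∂f(x₀,0)‖*_q ≤ srg_q ∂f(x₀, 0) ≤ (q+1)^(q+1)/q^q · ‖D_q ∂f(x₀,0)‖*_q`. -/
theorem stmt17 (hX : FiniteDimensional ℝ X) (q : ℝ) (hq : 0 < q)
    (f : X → EReal) (hbot : ∀ x, f x ≠ ⊥)
    (hlsc : LowerSemicontinuous f) (hconv : EConvexOn f)
    (x₀ : X) (hx₀ : f x₀ ≠ ⊤)
    (hmin : ∃ U ∈ 𝓝 x₀, ∀ x ∈ U, f x₀ ≤ f x) :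
    ((∃ l > 0, PosDefWith q l (gder q (subdiff f) x₀ 0)) ↔
      (∃ τ > 0, StrSubregWith q τ (subdiff f) x₀ 0)) ∧
    starNorm q (gder q (subdiff f) x₀ 0) ≤ srgMod q (subdiff f) x₀ 0 ∧
    srgMod q (subdiff f) x₀ 0 ≤
      ENNReal.ofReal ((q + 1) ^ (q + 1) / q ^ q) * starNorm q (gder q (subdiff f) x₀ 0) := by
  obtain ⟨m, hm⟩ : ∃ m : ℝ, f x₀ = m := ⟨_, (EReal.coe_toReal hx₀ (hbot _)).symm⟩
  have hglob : ∀ x, (m : EReal) ≤ f x := fun x => hm ▸ global_min hbot hconv hx₀ hmin x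
  have hC : 0 < (q + 1) ^ (q + 1) / q ^ q := by positivity
  refine ⟨⟨?_, ?_⟩, starNorm_le_srgMod hq _ _, ?_⟩
  · rintro ⟨l, hl, hpd⟩
    have h1 := le_starNorm_of_posDef hl hpd
    refine ⟨l / 2, half_pos hl, strSubreg_of_lt_starNorm hq (lt_of_lt_of_le ?_ h1)⟩
    exact (ENNReal.ofReal_lt_ofReal_iff hl).2 (half_lt_self hl)
  · rintro ⟨τ, hτ, hreg⟩
    exact ⟨_, div_pos hτ hC, posDef_of_strSubreg hq hbot hlsc hconv hm hglob hτ hreg⟩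
  · refine iSup₂_le fun τ ⟨hτ, hreg⟩ => ?_
    have h1 := le_starNorm_of_posDef (div_pos hτ hC)
      (posDef_of_strSubreg hq hbot hlsc hconv hm hglob hτ hreg)
    calc ENNReal.ofReal τ = ENNReal.ofReal ((q + 1) ^ (q + 1) / q ^ q) *
          ENNReal.ofReal (τ / ((q + 1) ^ (q + 1) / q ^ q)) := by
          rw [← ENNReal.ofReal_mul hC.le, mul_div_cancel₀ _ hC.ne']
      _ ≤ _ := by gcongr

end
end

section
/- Consider the parametric linear semi-infinite problem P(c, b) with compact Hausdorff index space T, continuous data t ↦ (a_t, b̄_t), nominal parameter (c̄, b̄), and x̄ ∈ S(c̄, b̄). Suppose P(c̄, b̄) satisfies the Slater condition and let q > 0. Then the following conditions are equivalent: (i) the solution mapping S possesses the q-order isolated calmness property at ((c̄, b̄), x̄); (ii) the partial solution mapping S_c̄ possesses the q-order isolated calmness property at (b̄, x̄); (iii) the level set mapping L possesses the q-order isolated calmness property at ((⟨c̄, x̄⟩, b̄), x̄); (iv) x̄ is a q-order sharp minimizer of the function f(x) = max{⟨c̄, x − x̄⟩, max_{t∈T}(⟨a_t, x⟩ − b̄_t)};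 (v) ‖f'_q(x̄;·)‖_q > 0. Moreover, each of these conditions implies (vi) ‖D_{1/q} S_c̄(b̄, x̄)‖⁺_{1/q} < +∞; and if T is finite, then (vi) is equivalent to (i)–(v) and clm_q S_c̄(b̄, x̄) = (‖D_{1/q} S_c̄(b̄, x̄)‖⁺_{1/q})^{-q}. -/
/-!
Let `f` be the residual of the nominal problem, `sipReal` below. Optimality of `x₀` gives `f ≥ 0`
and `f(x₀) = 0`, and everything is compared with the growth condition `τ ‖x - x₀‖ ^ q ≤ f(x)`
near `x₀`.

* Level sets (`calmWith_lev_iff`): `f(x)` is the least distance from the nominal parameter to a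
  parameter `(α, b)` with `x ∈ L(α, b)`, so calmness of `L` is the growth condition with the same
  modulus.
* Growth implies calmness of `S` (`calm_sol_of_sharp`): if `x ∈ S(c, b)`, comparing `x` with a
  point feasible for `b` on the segment from `x₀` to the Slater point gives
  `f(x) ≤ K ‖(c, b) - (c₀, b₀)‖`.
* Calmness of the partial solution mapping implies growth (`sharp_of_calm_partial`): by the
  Karush-Kuhn-Tucker conditions (`exists_kkt`), `-c₀ = ∑ l i • a (s i)` with `l i ≥ 0` and `s i`
  active at `x₀` whenever `l i > 0`. For such `i` the slack of constraint `s i` at `x` is at most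
  `K f(x)`. Hence with `b t = max ⟪a t, x⟫ (b₀ t - K f(x))` those constraints are active at `x`,
  so `x ∈ S(c₀, b)` while `‖b - b₀‖ ≤ K f(x)` (`exists_sol_near`).
* Growth is equivalent to positivity of the subderivative norm by compactness of the unit sphere
  (`sharpMin_iff_subderNorm_pos`).
* Graphical derivative: a calmness modulus passes to the limit (`plusNorm_gder_le_of_calm`). When
  `T` is finite, `C(T, ℝ)` is finite-dimensional and a rescaling and compactness argument gives
  the converse estimate (`le_plusNorm_gder_of_not_calm`), hence the formula for the modulus.
-/

noncomputable section

open Filter Topology Set Pointwise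
open scoped ENNReal RealInnerProductSpace

variable {X : Type*} {Y : Type*} [NormedAddCommGroup X] [NormedSpace ℝ X]
  [NormedAddCommGroup Y] [NormedSpace ℝ Y]

section SIP

variable {T : Type*} [TopologicalSpace T] [CompactSpace T]

/-- Feasible set mapping of the linear semi-infinite problem. -/
def feas {n : ℕ} (a : C(T, EuclideanSpace ℝ (Fin n))) (b : C(T, ℝ)) :
    Set (EuclideanSpace ℝ (Fin n)) :=
  {x | ∀ t : T, ⟪a t, x⟫ ≤ b t}

/-- Solution mapping `(c, b) ↦ S(c, b)` of the linear semi-infinite problem. -/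
def sol {n : ℕ} (a : C(T, EuclideanSpace ℝ (Fin n))) :
    EuclideanSpace ℝ (Fin n) × C(T, ℝ) → Set (EuclideanSpace ℝ (Fin n)) :=
  fun p => {x ∈ feas a p.2 | ∀ u ∈ feas a p.2, ⟪p.1, x⟫ ≤ ⟪p.1, u⟫}

/-- Level set mapping `(α, b) ↦ L(α, b)` of the linear semi-infinite problem. -/
def lev {n : ℕ} (a : C(T, EuclideanSpace ℝ (Fin n))) (c : EuclideanSpace ℝ (Fin n)) :
    ℝ × C(T, ℝ) → Set (EuclideanSpace ℝ (Fin n)) :=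
  fun p => {x ∈ feas a p.2 | ⟪c, x⟫ ≤ p.1}

/-- The function `f(x) = max {⟨c, x − x₀⟩, max_t (⟨a_t, x⟩ − b_t)}`. -/
def sipObj {n : ℕ} (a : C(T, EuclideanSpace ℝ (Fin n))) (b : C(T, ℝ))
    (c x₀ : EuclideanSpace ℝ (Fin n)) : EuclideanSpace ℝ (Fin n) → EReal :=
  fun x => ((max (⟪c, x - x₀⟫) (⨆ t : T, (⟪a t, x⟫ - b t)) : ℝ) : EReal)

end SIP

/-! ### Multipliers at a solution -/

/-- By Carathéodory's theorem the convex hull is a finite union of continuous images of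
`stdSimplex × s ^ k` with `k ≤ dim E + 1`. -/
lemma isCompact_convexHull_of_finiteDim {E : Type*} [NormedAddCommGroup E] [NormedSpace ℝ E]
    [FiniteDimensional ℝ E] {s : Set E} (hs : IsCompact s) : IsCompact (convexHull ℝ s) := by
  have key : convexHull ℝ s = ⋃ k ∈ Finset.range (Module.finrank ℝ E + 2),
      (fun p : (Fin k → ℝ) × (Fin k → E) => ∑ i, p.1 i • p.2 i) ''
        (stdSimplex ℝ (Fin k) ×ˢ Set.pi univ (fun _ => s)) := by
    apply Subset.antisymm
    · intro x hx
      obtain ⟨ι, _, z, w, hz, haff, hw, hw1, hx⟩ := eq_pos_convex_span_of_mem_convexHull hx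
      have hcard : Fintype.card ι ≤ Module.finrank ℝ E + 1 :=
        haff.card_le_finrank_succ.trans
          (Nat.add_le_add_right (Submodule.finrank_le _) 1)
      refine mem_biUnion (x := Fintype.card ι) (by simp; omega) ?_
      let e := Fintype.equivFin ι
      refine ⟨(w ∘ e.symm, z ∘ e.symm), ⟨⟨fun i => (hw _).le, ?_⟩, fun i _ => hz ⟨_, rfl⟩⟩, ?_⟩
      · rw [← hw1]
        exact e.symm.sum_comp w
      · rw [← hx]
        exact e.symm.sum_comp (fun i => w i • z i)
    · intro x hx
      simp only [mem_iUnion] at hx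
      obtain ⟨k, -, p, ⟨⟨h0, h1⟩, hp⟩, rfl⟩ := hx
      exact mem_convexHull_of_exists_fintype p.1 p.2 h0 h1 (fun i => hp i (mem_univ i)) rfl
  rw [key]
  refine (Finset.range _).isCompact_biUnion fun k _ => ?_
  refine ((isCompact_stdSimplex ℝ (Fin k)).prod (isCompact_univ_pi fun _ => hs)).image ?_
  fun_prop

/-- Karush-Kuhn-Tucker conditions: `-c₀` is a nonnegative combination of finitely many `a t` with
`t` active at `x₀`. The pairs `(a t, ⟪a t, x₀⟫ - b₀ t)` and `(c₀, 0)` have `0` in their convex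
hull; the second coordinate encodes complementary slackness. -/
lemma exists_kkt {n : ℕ} {T : Type*} [TopologicalSpace T] [CompactSpace T] [Nonempty T]
    (a : C(T, EuclideanSpace ℝ (Fin n))) (b₀ : C(T, ℝ))
    (c₀ x₀ : EuclideanSpace ℝ (Fin n)) (hsol : x₀ ∈ sol a (c₀, b₀))
    (hslater : ∃ xSlater, ∀ t : T, ⟪a t, xSlater⟫ < b₀ t) :
    ∃ (ι : Type) (_ : Fintype ι) (l : ι → ℝ) (s : ι → T), (∀ i, 0 ≤ l i) ∧
      c₀ = -∑ i, l i • a (s i) ∧ ∀ i, 0 < l i → ⟪a (s i), x₀⟫ = b₀ (s i) := by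
  obtain ⟨hfeas, hopt⟩ := hsol
  have hfeas' : ∀ t, ⟪a t, x₀⟫ ≤ b₀ t := hfeas
  obtain ⟨y, hy⟩ := hslater
  let p : T → EuclideanSpace ℝ (Fin n) × ℝ := fun t => (a t, ⟪a t, x₀⟫ - b₀ t)
  have hp : Continuous p := by fun_prop
  have hcomp : IsCompact (convexHull ℝ (insert (c₀, (0 : ℝ)) (range p))) :=
    isCompact_convexHull_of_finiteDim ((isCompact_range hp).insert _)
  -- no hyperplane strictly separates `0` from the hull: it would yield a better feasible point
  have h0 : (0 : EuclideanSpace ℝ (Fin n) × ℝ) ∈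
      convexHull ℝ (insert (c₀, (0 : ℝ)) (range p)) := by
    by_contra hnot
    obtain ⟨f, u, hf, hu⟩ :=
      geometric_hahn_banach_closed_point (convex_convexHull ℝ _) hcomp.isClosed hnot
    rw [map_zero] at hu
    let d := (InnerProductSpace.toDual ℝ (EuclideanSpace ℝ (Fin n))).symm
      (f.comp (ContinuousLinearMap.inl ℝ _ ℝ))
    have hd : ∀ v r, f (v, r) = ⟪v, d⟫ + r * f (0, 1) := by
      intro v r
      have h1 : ⟪d, v⟫ = f (v, 0) := by
        simp [d]
      rw [real_inner_comm, h1, ← smul_eq_mul, ← map_smul, ← map_add]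
      simp
    have hc : ⟪c₀, d⟫ < 0 := by
      have := hf _ (subset_convexHull ℝ _ (mem_insert _ _))
      rw [hd] at this
      linarith
    have ht : ∀ t, ⟪a t, d⟫ + (⟪a t, x₀⟫ - b₀ t) * f (0, 1) < 0 := by
      intro t
      have := hf _ (subset_convexHull ℝ _ (mem_insert_of_mem _ (mem_range_self t)))
      simp only [p] at this
      rw [hd] at this
      linarith
    rcases lt_or_ge 0 (f (0, 1)) with hs | hs
    · have hmem : x₀ + (f (0, 1))⁻¹ • d ∈ feas a b₀ := by
        intro t
        have h1 := ht t
        rw [inner_add_right, inner_smul_right]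
        have h2 : (f (0, 1))⁻¹ * (⟪a t, d⟫ + (⟪a t, x₀⟫ - b₀ t) * f (0, 1)) ≤ 0 :=
          mul_nonpos_of_nonneg_of_nonpos (inv_nonneg.2 hs.le) h1.le
        rw [mul_add, mul_comm (⟪a t, x₀⟫ - b₀ t), inv_mul_cancel_left₀ hs.ne'] at h2
        linarith
      have := hopt _ hmem
      simp only [inner_add_right, inner_smul_right] at this
      have h3 := mul_neg_of_pos_of_neg (inv_pos.2 hs) hc
      linarith
    · have hmem : x₀ + d ∈ feas a b₀ := by
        intro t
        rw [inner_add_right]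
        nlinarith [ht t, hfeas' t, mul_nonneg_of_nonpos_of_nonpos (sub_nonpos.2 (hfeas' t)) hs]
      have := hopt _ hmem
      simp only [inner_add_right] at this
      linarith
  rw [convexHull_insert (range_nonempty p), convexJoin_singleton_left] at h0
  simp only [mem_iUnion] at h0
  obtain ⟨z, hz, μ, ν, hμ, hν, hμν, hsum⟩ := h0
  -- the multiplier of the objective is positive, by the Slater condition
  have hμ0 : 0 < μ := by
    refine lt_of_le_of_ne hμ fun h => ?_
    have hz0 : z = 0 := by
      have : ν = 1 := by linarith
      rw [← h, this] at hsum
      simpa using hsum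
    let g : EuclideanSpace ℝ (Fin n) × ℝ →ₗ[ℝ] ℝ :=
      (innerₗ _ (y - x₀)).coprod LinearMap.id
    have hneg : convexHull ℝ (range p) ⊆ {w | g w < 0} := by
      refine convexHull_min ?_ (convex_halfSpace_lt g.isLinear 0)
      rintro _ ⟨t, rfl⟩
      have h2 : g (p t) = ⟪y - x₀, a t⟫ + (⟪a t, x₀⟫ - b₀ t) := by simp [g, p, inner_sub_left]
      change g (p t) < 0
      rw [h2, real_inner_comm, inner_sub_right]
      linarith [hy t]
    have := hneg hz
    rw [hz0] at this
    simp at this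
  obtain ⟨ι, hι, w, zz, hw0, hw1, hzz, hzsum⟩ := mem_convexHull_iff_exists_fintype.1 hz
  choose s hs using hzz
  have hz1 : z.1 = ∑ i, w i • a (s i) := by
    rw [← hzsum, Prod.fst_sum]
    simp [← hs, p]
  have hz2 : z.2 = ∑ i, w i * (⟪a (s i), x₀⟫ - b₀ (s i)) := by
    rw [← hzsum, Prod.snd_sum]
    simp [← hs, p]
  have e1 : μ • c₀ + ν • z.1 = 0 := congrArg Prod.fst hsum
  have e2 : ν * z.2 = 0 := by simpa using congrArg Prod.snd hsum
  refine ⟨ι, hι, fun i => μ⁻¹ * ν * w i, s, fun i => ?_, ?_, ?_⟩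
  · have := hw0 i
    positivity
  · have : c₀ = -((μ⁻¹ * ν) • z.1) := by
      have h3 : μ • c₀ = -(ν • z.1) := eq_neg_of_add_eq_zero_left e1
      rw [← inv_smul_smul₀ hμ0.ne' c₀, h3, smul_neg, smul_smul]
    rw [this, hz1, Finset.smul_sum]
    simp [smul_smul]
  · intro i hi
    have hν0 : ν ≠ 0 := by rintro rfl; simp at hi
    have hwi : w i ≠ 0 := by intro h; simp [h] at hi
    have hz20 : z.2 = 0 := (mul_eq_zero.1 e2).resolve_left hν0
    rw [hz2] at hz20
    have := (Finset.sum_eq_zero_iff_of_nonpos (fun j _ =>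
      mul_nonpos_of_nonneg_of_nonpos (hw0 j) (sub_nonpos.2 (hfeas' (s j))))).1 hz20 i
        (Finset.mem_univ i)
    exact sub_eq_zero.1 ((mul_eq_zero.1 this).resolve_left hwi)

/-! ### Graphical derivative and calmness modulus -/

/-- Passing to the limit in the calmness estimate gives `τ ‖x‖ ^ q ≤ ‖y‖` on the graph of the
derivative. -/
lemma plusNorm_gder_le_of_calm {q τ : ℝ} (hq : 0 < q) (hτ : 0 < τ) {S : Y → Set X} {y₀ : Y}
    {x₀ : X} (h : CalmWith q τ S y₀ x₀) :
    plusNorm (1 / q) (gder (1 / q) S y₀ x₀) ≤ ENNReal.ofReal τ ^ (-(1 / q)) := by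
  obtain ⟨U, hU, V, hV, hcalm⟩ := h
  refine iSup₂_le ?_
  rintro ⟨y, x⟩ ⟨⟨u, v, t, hu, hv, htpos, ht, hmem⟩, hne⟩
  have hq' : 0 < 1 / q := by positivity
  have ht1 : Tendsto (fun k => t k ^ (1 / q)) atTop (𝓝 0) := by
    have := ht.rpow_const (p := 1 / q) (Or.inr hq'.le)
    rwa [Real.zero_rpow hq'.ne'] at this
  have hx : Tendsto (fun k => x₀ + t k ^ (1 / q) • v k) atTop (𝓝 x₀) := by
    simpa using tendsto_const_nhds.add (ht1.smul hv)
  have hy : Tendsto (fun k => y₀ + t k • u k) atTop (𝓝 y₀) := by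
    simpa using tendsto_const_nhds.add (ht.smul hu)
  have hlim : τ * ‖x‖ ^ q ≤ ‖y‖ := by
    refine le_of_tendsto_of_tendsto
      (tendsto_const_nhds.mul (hv.norm.rpow_const (Or.inr hq.le))) hu.norm ?_
    filter_upwards [hx.eventually_mem hU, hy.eventually_mem hV] with k hkU hkV
    have h1 := hcalm _ hkV _ (hmem k) hkU
    have htk := htpos k
    rw [add_sub_cancel_left, add_sub_cancel_left, norm_smul, norm_smul,
      Real.norm_of_nonneg (by positivity), Real.norm_of_nonneg htk.le,
      Real.mul_rpow (by positivity) (norm_nonneg _), ← Real.rpow_mul htk.le,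
      one_div_mul_cancel hq.ne', Real.rpow_one] at h1
    refine le_of_mul_le_mul_left ?_ htk
    calc t k * (τ * ‖v k‖ ^ q) = τ * (t k * ‖v k‖ ^ q) := by ring
      _ ≤ _ := h1
  have hy0 : 0 < ‖y‖ := by
    refine lt_of_le_of_ne (norm_nonneg _) fun h0 => hne ?_
    rw [← h0] at hlim
    have hxq : ‖x‖ ^ q = 0 := by
      have : 0 ≤ ‖x‖ ^ q := by positivity
      nlinarith
    have hx0 : x = 0 := norm_eq_zero.1 ((Real.rpow_eq_zero (norm_nonneg _) hq.ne').1 hxq)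
    rw [Prod.mk_eq_zero]
    exact ⟨norm_eq_zero.1 h0.symm, hx0⟩
  have hreal : ‖x‖ ≤ τ ^ (-(1 / q)) * ‖y‖ ^ (1 / q) := by
    have h2 : ‖x‖ ^ q ≤ τ⁻¹ * ‖y‖ := by
      rw [inv_mul_eq_div, le_div_iff₀ hτ]
      linarith
    have h3 := Real.rpow_le_rpow (by positivity) h2 hq'.le
    rwa [← Real.rpow_mul (norm_nonneg _), mul_one_div_cancel hq.ne', Real.rpow_one,
      Real.mul_rpow (by positivity) (by positivity), Real.inv_rpow hτ.le,
      ← Real.rpow_neg hτ.le] at h3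
  rw [ENNReal.ofReal_rpow_of_pos hτ]
  refine ENNReal.div_le_of_le_mul ?_
  rw [← ENNReal.ofReal_mul (by positivity)]
  exact ENNReal.ofReal_le_ofReal hreal

/-- A failure of calmness with modulus `τ` produces, by compactness of balls after rescaling, an
element `(y, x)` of the graph of the derivative with `‖x‖ = 1` and `‖y‖ ≤ τ`. -/
lemma le_plusNorm_gder_of_not_calm [ProperSpace X] [ProperSpace Y] {q τ : ℝ} (hq : 0 < q)
    (hτ : 0 < τ) {S : Y → Set X} {y₀ : Y} {x₀ : X} (h : ¬ CalmWith q τ S y₀ x₀) :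
    ENNReal.ofReal τ ^ (-(1 / q)) ≤ plusNorm (1 / q) (gder (1 / q) S y₀ x₀) := by
  have hseq : ∀ k : ℕ, ∃ p : Y × X, dist p.1 y₀ < 1 / ((k : ℝ) + 1) ∧
      dist p.2 x₀ < 1 / ((k : ℝ) + 1) ∧ p.2 ∈ S p.1 ∧ ‖p.1 - y₀‖ < τ * ‖p.2 - x₀‖ ^ q := by
    intro k
    by_contra hcon
    push Not at hcon
    refine h ⟨_, Metric.ball_mem_nhds x₀ (Nat.one_div_pos_of_nat (n := k)),
      _, Metric.ball_mem_nhds y₀ (Nat.one_div_pos_of_nat (n := k)), fun y hy x hx hxU => ?_⟩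
    exact hcon (y, x) hy hxU hx
  choose p hpy hpx hpS hlt using hseq
  have hpos : ∀ k, 0 < ‖(p k).2 - x₀‖ := by
    intro k
    refine lt_of_le_of_ne (norm_nonneg _) fun h0 => ?_
    have := hlt k
    rw [← h0, Real.zero_rpow hq.ne', mul_zero] at this
    exact absurd this (not_lt.2 (norm_nonneg _))
  -- rescaling so that the solution increments become unit vectors
  let t : ℕ → ℝ := fun k => ‖(p k).2 - x₀‖ ^ q
  have htpos : ∀ k, 0 < t k := fun k => Real.rpow_pos_of_pos (hpos k) q
  have htq : ∀ k, t k ^ (1 / q) = ‖(p k).2 - x₀‖ := by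
    intro k
    simp only [t]
    rw [← Real.rpow_mul (norm_nonneg _), mul_one_div_cancel hq.ne', Real.rpow_one]
  let w : ℕ → Y × X := fun k =>
    ((t k)⁻¹ • ((p k).1 - y₀), ‖(p k).2 - x₀‖⁻¹ • ((p k).2 - x₀))
  have hw : ∀ k, w k ∈ Metric.closedBall (0 : Y) τ ×ˢ Metric.sphere (0 : X) 1 := by
    intro k
    refine ⟨?_, ?_⟩
    · rw [mem_closedBall_zero_iff, norm_smul, norm_inv, Real.norm_of_nonneg (htpos k).le,
        inv_mul_eq_div, div_le_iff₀ (htpos k)]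
      exact (hlt k).le
    · rw [mem_sphere_zero_iff_norm, norm_smul, norm_inv, norm_norm,
        inv_mul_cancel₀ (hpos k).ne']
  obtain ⟨⟨y, x⟩, ⟨hyτ, hx1⟩, φ, hφ, hlim⟩ :=
    ((isCompact_closedBall (0 : Y) τ).prod (isCompact_sphere (0 : X) 1)).tendsto_subseq hw
  rw [mem_closedBall_zero_iff] at hyτ
  rw [mem_sphere_zero_iff_norm] at hx1
  simp only at hyτ hx1
  have ht0 : Tendsto t atTop (𝓝 0) := by
    have h1 : Tendsto (fun k => ‖(p k).2 - x₀‖) atTop (𝓝 0) := by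
      refine squeeze_zero (fun _ => norm_nonneg _) (fun k => ?_)
        (tendsto_one_div_add_atTop_nhds_zero_nat (𝕜 := ℝ))
      rw [← dist_eq_norm]
      exact (hpx k).le
    have := h1.rpow_const (p := q) (Or.inr hq.le)
    rwa [Real.zero_rpow hq.ne'] at this
  have hmem : x ∈ gder (1 / q) S y₀ x₀ y := by
    refine ⟨fun k => (w (φ k)).1, fun k => (w (φ k)).2, fun k => t (φ k),
      (continuous_fst.tendsto _).comp hlim, (continuous_snd.tendsto _).comp hlim,
      fun k => htpos _, ht0.comp hφ.tendsto_atTop, fun k => ?_⟩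
    simp only [w]
    rw [htq, smul_inv_smul₀ (hpos _).ne', smul_inv_smul₀ (htpos _).ne', add_sub_cancel,
      add_sub_cancel]
    exact hpS _
  have hne : ((y, x) : Y × X) ≠ 0 := by
    intro h0
    rw [(Prod.mk_eq_zero.1 h0).2, norm_zero] at hx1
    exact zero_ne_one hx1
  refine le_trans ?_ (le_iSup₂ (f := fun (p : Y × X)
    (_ : p.2 ∈ gder (1 / q) S y₀ x₀ p.1 ∧ p ≠ 0) =>
    ENNReal.ofReal ‖p.2‖ / ENNReal.ofReal (‖p.1‖ ^ (1 / q))) (y, x) ⟨hmem, hne⟩)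
  simp only [hx1, ENNReal.ofReal_one, one_div]
  rw [ENNReal.rpow_neg, ENNReal.inv_le_inv, ENNReal.ofReal_rpow_of_pos hτ]
  exact ENNReal.ofReal_le_ofReal (Real.rpow_le_rpow (norm_nonneg _) hyτ (by positivity))

lemma clmMod_le_plusNorm_rpow {q : ℝ} (hq : 0 < q) (S : Y → Set X) (y₀ : Y) (x₀ : X) :
    clmMod q S y₀ x₀ ≤ plusNorm (1 / q) (gder (1 / q) S y₀ x₀) ^ (-q) := by
  refine iSup₂_le fun τ hτ => ?_
  have h := ENNReal.rpow_le_rpow (plusNorm_gder_le_of_calm hq hτ.1 hτ.2) hq.le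
  rw [← ENNReal.rpow_mul, neg_mul, one_div_mul_cancel hq.ne', ENNReal.rpow_neg_one] at h
  rw [ENNReal.rpow_neg]
  exact ENNReal.le_inv_iff_le_inv.1 h

lemma calm_of_lt_plusNorm_rpow [ProperSpace X] [ProperSpace Y] {q τ : ℝ} (hq : 0 < q)
    (hτ : 0 < τ) {S : Y → Set X} {y₀ : Y} {x₀ : X}
    (h : ENNReal.ofReal τ < plusNorm (1 / q) (gder (1 / q) S y₀ x₀) ^ (-q)) :
    CalmWith q τ S y₀ x₀ := by
  by_contra hcon
  have h1 := ENNReal.rpow_le_rpow (le_plusNorm_gder_of_not_calm hq hτ hcon) hq.le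
  rw [← ENNReal.rpow_mul, neg_mul, one_div_mul_cancel hq.ne', ENNReal.rpow_neg_one] at h1
  rw [ENNReal.rpow_neg] at h
  exact absurd h (not_lt.2 (ENNReal.inv_le_iff_inv_le.1 h1))

lemma plusNorm_rpow_le_clmMod [ProperSpace X] [ProperSpace Y] {q : ℝ} (hq : 0 < q)
    (S : Y → Set X) (y₀ : Y) (x₀ : X) :
    plusNorm (1 / q) (gder (1 / q) S y₀ x₀) ^ (-q) ≤ clmMod q S y₀ x₀ := by
  refine le_of_forall_lt fun r hr => ?_
  obtain ⟨m, hrm, hm⟩ := ENNReal.lt_iff_exists_nnreal_btwn.1 hr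
  have hm0 : (0 : ℝ) < m := by
    have : (0 : ℝ≥0∞) < m := lt_of_le_of_lt (zero_le) hrm
    exact_mod_cast this
  refine hrm.trans_le ?_
  rw [← ENNReal.ofReal_coe_nnreal] at hm ⊢
  exact le_iSup₂ (f := fun (τ : ℝ) (_ : 0 < τ ∧ CalmWith q τ S y₀ x₀) => ENNReal.ofReal τ)
    (m : ℝ) ⟨hm0, calm_of_lt_plusNorm_rpow hq hm0 hm⟩

/-! ### Sharp minimality and the subderivative -/

lemma coe_lt_of_ofReal_lt_erealPos {m : ℝ} (hm : 0 < m) {y : EReal}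
    (h : ENNReal.ofReal m < erealPos y) : (m : EReal) < y := by
  induction y with
  | bot => simp [erealPos] at h
  | top => exact EReal.coe_lt_top m
  | coe r =>
    simp only [erealPos, EReal.coe_ne_top, if_false, EReal.toReal_coe] at h
    exact_mod_cast (ENNReal.ofReal_lt_ofReal_iff_of_nonneg hm.le).1 h

lemma ofReal_le_erealPos {m : ℝ} {y : EReal} (h : (m : EReal) ≤ y) :
    ENNReal.ofReal m ≤ erealPos y := by
  induction y with
  | bot => simp at h
  | top => simp [erealPos]
  | coe r =>
    simp only [erealPos, EReal.coe_ne_top, if_false, EReal.toReal_coe]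
    exact ENNReal.ofReal_le_ofReal (by exact_mod_cast h)

/-- The local estimates along each unit direction become uniform by compactness of the unit
sphere. -/
lemma sharpMin_iff_subderNorm_pos [ProperSpace X] {q : ℝ} (hq : 0 < q) (g : X → ℝ) (x₀ : X)
    (hg0 : g x₀ = 0) :
    (∃ τ > 0, ∀ᶠ x in 𝓝 x₀, τ * ‖x - x₀‖ ^ q ≤ g x) ↔
      0 < subderNorm q (fun x => (g x : EReal)) x₀ := by
  have hquot : ∀ p : X × ℝ, ((g (x₀ + p.2 • p.1) : EReal) - (g x₀ : EReal)) /
      ((p.2 ^ q : ℝ) : EReal) = ((g (x₀ + p.2 • p.1) / p.2 ^ q : ℝ) : EReal) := by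
    intro p
    rw [hg0, EReal.coe_zero, sub_zero, EReal.coe_div]
  have hsub : ∀ x, subder q (fun x => (g x : EReal)) x₀ x =
      liminf (fun p : X × ℝ => ((g (x₀ + p.2 • p.1) / p.2 ^ q : ℝ) : EReal))
        ((𝓝 x) ×ˢ (𝓝[>] (0 : ℝ))) := fun x => by simp only [subder, hquot]
  have hpos : ∀ x : X, ∀ᶠ p : X × ℝ in (𝓝 x) ×ˢ (𝓝[>] (0 : ℝ)), 0 < p.2 := fun x =>
    (eventually_mem_nhdsWithin (a := (0 : ℝ)) (s := Ioi 0)).prod_inr (𝓝 x)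
  constructor
  · rintro ⟨τ, hτ, h⟩
    refine lt_of_lt_of_le (ENNReal.ofReal_pos.2 (half_pos hτ)) (le_iInf₂ fun x hx => ?_)
    apply ofReal_le_erealPos
    rw [hsub]
    refine le_liminf_of_le (by isBoundedDefault) ?_
    have h1 : Tendsto (fun p : X × ℝ => x₀ + p.2 • p.1) ((𝓝 x) ×ˢ (𝓝[>] (0 : ℝ))) (𝓝 x₀) := by
      have h2 : Tendsto (fun p : X × ℝ => x₀ + p.2 • p.1) (𝓝 (x, 0)) (𝓝 (x₀ + (0 : ℝ) • x)) :=
        (by fun_prop : Continuous fun p : X × ℝ => x₀ + p.2 • p.1).tendsto _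
      rw [zero_smul, add_zero, nhds_prod_eq] at h2
      exact h2.mono_left (Filter.prod_mono le_rfl nhdsWithin_le_nhds)
    have h3 : ∀ᶠ p : X × ℝ in (𝓝 x) ×ˢ (𝓝[>] (0 : ℝ)), 1 / 2 < ‖p.1‖ ^ q := by
      have h4 : Tendsto (fun p : X × ℝ => ‖p.1‖ ^ q) ((𝓝 x) ×ˢ (𝓝[>] (0 : ℝ))) (𝓝 (‖x‖ ^ q)) :=
        tendsto_fst.norm.rpow_const (Or.inr hq.le)
      rw [hx, Real.one_rpow] at h4
      exact h4.eventually_const_lt (by norm_num)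
    filter_upwards [h1.eventually h, h3, hpos x] with p hp1 hp2 hp3
    rw [EReal.coe_le_coe_iff, le_div_iff₀ (by positivity)]
    rw [add_sub_cancel_left, norm_smul, Real.norm_of_nonneg hp3.le,
      Real.mul_rpow hp3.le (norm_nonneg _)] at hp1
    have h5 : 0 < p.2 ^ q := by positivity
    nlinarith [mul_pos hτ h5]
  · intro h
    obtain ⟨m, hm0, hm⟩ := ENNReal.lt_iff_exists_nnreal_btwn.1 h
    have hm0 : (0 : ℝ) < m := by exact_mod_cast hm0
    rw [← ENNReal.ofReal_coe_nnreal] at hm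
    refine ⟨m, hm0, ?_⟩
    have hall : ∀ᶠ p : X × ℝ in (𝓝ˢ (Metric.sphere (0 : X) 1)) ×ˢ (𝓝[>] (0 : ℝ)),
        (m : ℝ) * p.2 ^ q ≤ g (x₀ + p.2 • p.1) := by
      rw [(isCompact_sphere (0 : X) 1).nhdsSet_prod_eq_biSup]
      simp only [eventually_iSup]
      intro x hx
      have hlt := coe_lt_of_ofReal_lt_erealPos hm0
        (hm.trans_le (iInf₂_le x (mem_sphere_zero_iff_norm.1 hx)))
      rw [hsub] at hlt
      filter_upwards [eventually_lt_of_lt_liminf hlt (by isBoundedDefault), hpos x]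
        with p hp1 hp2
      rw [EReal.coe_lt_coe_iff, lt_div_iff₀ (by positivity)] at hp1
      exact hp1.le
    obtain ⟨P, hP, Q, hQ, hPQ⟩ := Filter.eventually_prod_iff.1 hall
    rw [eventually_nhdsWithin_iff, Metric.eventually_nhds_iff] at hQ
    obtain ⟨δ, hδ, hQ⟩ := hQ
    filter_upwards [Metric.ball_mem_nhds x₀ hδ] with y hy
    rw [mem_ball_iff_norm] at hy
    rcases eq_or_ne y x₀ with rfl | hne
    · simp [hg0, Real.zero_rpow hq.ne']
    · have hn : 0 < ‖y - x₀‖ := norm_pos_iff.2 (sub_ne_zero.2 hne)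
      have h1 : P (‖y - x₀‖⁻¹ • (y - x₀)) := by
        refine (Filter.Eventually.self_of_nhdsSet hP) _ ?_
        rw [mem_sphere_zero_iff_norm, norm_smul, norm_inv, norm_norm, inv_mul_cancel₀ hn.ne']
      have h2 := hPQ h1 (hQ (y := ‖y - x₀‖) (by simpa using hy) hn)
      simpa [smul_inv_smul₀ hn.ne'] using h2

/-! ### The semi-infinite problem: residual, level sets, perturbed solutions -/

section Sip

variable {n : ℕ} {T : Type*} [TopologicalSpace T] [CompactSpace T]

lemma calm_partial_of_calm {a : C(T, EuclideanSpace ℝ (Fin n))} {b₀ : C(T, ℝ)}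
    {c₀ x₀ : EuclideanSpace ℝ (Fin n)} {q τ : ℝ}
    (h : CalmWith q τ (sol a) (c₀, b₀) x₀) :
    CalmWith q τ (fun b => sol a (c₀, b)) b₀ x₀ := by
  obtain ⟨U, hU, V, hV, hcalm⟩ := h
  have hlim : Tendsto (fun b : C(T, ℝ) => (c₀, b)) (𝓝 b₀) (𝓝 (c₀, b₀)) :=
    (Continuous.prodMk_right c₀).tendsto b₀
  refine ⟨U, hU, _, hlim hV, fun b hb x hx hxU => (hcalm _ hb x hx hxU).trans ?_⟩
  simp [Prod.norm_def]

/-- The real-valued function underlying `sipObj`. -/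
def sipReal (a : C(T, EuclideanSpace ℝ (Fin n))) (b : C(T, ℝ))
    (c x₀ x : EuclideanSpace ℝ (Fin n)) : ℝ :=
  max (⟪c, x - x₀⟫) (⨆ t : T, (⟪a t, x⟫ - b t))

variable [Nonempty T] {a : C(T, EuclideanSpace ℝ (Fin n))} {b₀ : C(T, ℝ)}
  {c₀ x₀ : EuclideanSpace ℝ (Fin n)}

lemma sipReal_le_iff {x : EuclideanSpace ℝ (Fin n)} {r : ℝ} :
    sipReal a b₀ c₀ x₀ x ≤ r ↔ ⟪c₀, x - x₀⟫ ≤ r ∧ ∀ t, ⟪a t, x⟫ - b₀ t ≤ r := by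
  have hb : BddAbove (range fun t => ⟪a t, x⟫ - b₀ t) :=
    (isCompact_range (by fun_prop)).bddAbove
  rw [sipReal, max_le_iff, ciSup_le_iff hb]

/-- A negative value would give a feasible point better than the solution `x₀`. -/
lemma sipReal_nonneg (hsol : x₀ ∈ sol a (c₀, b₀)) (x : EuclideanSpace ℝ (Fin n)) :
    0 ≤ sipReal a b₀ c₀ x₀ x := by
  by_contra! h
  obtain ⟨h1, h2⟩ := sipReal_le_iff.1 (le_refl (sipReal a b₀ c₀ x₀ x))
  have h3 : ⟪c₀, x₀⟫ ≤ ⟪c₀, x⟫ := hsol.2 x fun t => by linarith [h2 t]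
  rw [inner_sub_right] at h1
  linarith

lemma sipReal_le_mul (hsol : x₀ ∈ sol a (c₀, b₀)) (x : EuclideanSpace ℝ (Fin n)) :
    sipReal a b₀ c₀ x₀ x ≤ (‖c₀‖ + ‖a‖) * ‖x - x₀‖ := by
  have h0 := norm_nonneg (x - x₀)
  refine sipReal_le_iff.2 ⟨?_, fun t => ?_⟩
  · nlinarith [real_inner_le_norm c₀ (x - x₀), mul_nonneg (norm_nonneg a) h0]
  · have h1 : ⟪a t, x₀⟫ ≤ b₀ t := hsol.1 t
    have h2 := real_inner_le_norm (a t) (x - x₀)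
    rw [inner_sub_right] at h2
    nlinarith [mul_le_mul_of_nonneg_right (a.norm_coe_le_norm t) h0,
      mul_nonneg (norm_nonneg c₀) h0]

lemma sipReal_self (hsol : x₀ ∈ sol a (c₀, b₀)) : sipReal a b₀ c₀ x₀ x₀ = 0 :=
  le_antisymm (by simpa using sipReal_le_mul hsol x₀) (sipReal_nonneg hsol x₀)

lemma tendsto_sipReal (hsol : x₀ ∈ sol a (c₀, b₀)) :
    Tendsto (sipReal a b₀ c₀ x₀) (𝓝 x₀) (𝓝 0) := by
  refine squeeze_zero (sipReal_nonneg hsol) (sipReal_le_mul hsol) ?_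
  have : Continuous fun x => (‖c₀‖ + ‖a‖) * ‖x - x₀‖ := by fun_prop
  simpa using this.tendsto x₀

/-- Since `f(x₀) = 0`, sharp minimality is a real-valued growth condition. -/
lemma sharpMinWith_iff (hsol : x₀ ∈ sol a (c₀, b₀)) {q τ : ℝ} :
    SharpMinWith q τ (sipObj a b₀ c₀ x₀) x₀ ↔
      ∀ᶠ x in 𝓝 x₀, τ * ‖x - x₀‖ ^ q ≤ sipReal a b₀ c₀ x₀ x := by
  have h : ∀ x, ((τ * ‖x - x₀‖ ^ q : ℝ) : EReal) ≤
      sipObj a b₀ c₀ x₀ x - sipObj a b₀ c₀ x₀ x₀ ↔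
        τ * ‖x - x₀‖ ^ q ≤ sipReal a b₀ c₀ x₀ x := by
    intro x
    change _ ≤ (sipReal a b₀ c₀ x₀ x : EReal) - (sipReal a b₀ c₀ x₀ x₀ : EReal) ↔ _
    rw [sipReal_self hsol, EReal.coe_zero, sub_zero, EReal.coe_le_coe_iff]
  simp only [SharpMinWith, h]
  exact (Filter.eventually_iff_exists_mem).symm

/-- The residual `f(x)` is the least distance from the nominal parameter to a parameter `(α, b)`
with `x ∈ L(α, b)`: it is attained by adding `f(x)` to all right-hand sides. -/
lemma calmWith_lev_iff (hsol : x₀ ∈ sol a (c₀, b₀)) {q τ : ℝ} :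
    CalmWith q τ (lev a c₀) (⟪c₀, x₀⟫, b₀) x₀ ↔
      ∀ᶠ x in 𝓝 x₀, τ * ‖x - x₀‖ ^ q ≤ sipReal a b₀ c₀ x₀ x := by
  constructor
  · rintro ⟨U, hU, V, hV, h⟩
    have hlim : Tendsto (fun x => ((⟪c₀, x₀⟫ + sipReal a b₀ c₀ x₀ x,
        b₀ + ContinuousMap.const T (sipReal a b₀ c₀ x₀ x)) : ℝ × C(T, ℝ))) (𝓝 x₀)
        (𝓝 (⟪c₀, x₀⟫, b₀)) := by
      have hc : Continuous fun r : ℝ =>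
          ((⟪c₀, x₀⟫ + r, b₀ + ContinuousMap.const T r) : ℝ × C(T, ℝ)) := by
        have : Continuous fun r : ℝ => ContinuousMap.const T r := ContinuousMap.continuous_const'
        fun_prop
      have h2 := (hc.tendsto 0).comp (tendsto_sipReal hsol)
      have h3 : b₀ + ContinuousMap.const T (0 : ℝ) = b₀ := by ext; simp
      simp only [add_zero, h3] at h2
      exact h2
    filter_upwards [hU, hlim.eventually_mem hV] with x hxU hxV
    obtain ⟨h1, h2⟩ := sipReal_le_iff.1 (le_refl (sipReal a b₀ c₀ x₀ x))
    refine (h _ hxV x ⟨fun t => ?_, ?_⟩ hxU).trans ?_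
    · change _ ≤ b₀ t + sipReal a b₀ c₀ x₀ x
      linarith [h2 t]
    · rw [inner_sub_right] at h1
      change _ ≤ ⟪c₀, x₀⟫ + sipReal a b₀ c₀ x₀ x
      linarith
    · have h0 := sipReal_nonneg hsol x
      rw [Prod.mk_sub_mk, add_sub_cancel_left, add_sub_cancel_left, Prod.norm_mk, max_le_iff]
      refine ⟨by rw [Real.norm_of_nonneg h0], (ContinuousMap.norm_le _ h0).2 fun t => ?_⟩
      simp [abs_of_nonneg h0]
  · intro h
    refine ⟨_, h, univ, univ_mem, ?_⟩
    rintro ⟨α, b⟩ - x ⟨hx1, hx2⟩ hxU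
    refine le_trans hxU (sipReal_le_iff.2 ⟨?_, fun t => ?_⟩)
    · have h1 : ‖α - ⟪c₀, x₀⟫‖ ≤ ‖((α, b) : ℝ × C(T, ℝ)) - (⟪c₀, x₀⟫, b₀)‖ :=
        norm_fst_le (((α, b) : ℝ × C(T, ℝ)) - (⟪c₀, x₀⟫, b₀))
      rw [inner_sub_right]
      have h2 : ⟪c₀, x⟫ ≤ α := hx2
      linarith [le_abs_self (α - ⟪c₀, x₀⟫), Real.norm_eq_abs (α - ⟪c₀, x₀⟫)]
    · have h1 : ‖b - b₀‖ ≤ ‖((α, b) : ℝ × C(T, ℝ)) - (⟪c₀, x₀⟫, b₀)‖ :=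
        norm_snd_le (((α, b) : ℝ × C(T, ℝ)) - (⟪c₀, x₀⟫, b₀))
      have h2 : ⟪a t, x⟫ ≤ b t := hx1 t
      have h3 : |b t - b₀ t| ≤ ‖b - b₀‖ := (b - b₀).norm_coe_le_norm t
      linarith [le_abs_self (b t - b₀ t)]

/-- Under the Slater condition the residual of a solution of a perturbed problem is of the order
of the perturbation. -/
lemma calm_sol_of_sharp (hsol : x₀ ∈ sol a (c₀, b₀))
    (hslater : ∃ xSlater, ∀ t : T, ⟪a t, xSlater⟫ < b₀ t) {q τ : ℝ} (hτ : 0 < τ)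
    (h : ∀ᶠ x in 𝓝 x₀, τ * ‖x - x₀‖ ^ q ≤ sipReal a b₀ c₀ x₀ x) :
    ∃ τ > 0, CalmWith q τ (sol a) (c₀, b₀) x₀ := by
  obtain ⟨y, hy⟩ := hslater
  obtain ⟨ρ, hρ, hyρ⟩ : ∃ ρ > 0, ∀ t, ⟪a t, y⟫ + ρ ≤ b₀ t := by
    obtain ⟨t₀, -, ht₀⟩ := (isCompact_univ (X := T)).exists_isMinOn univ_nonempty
      (f := fun t => b₀ t - ⟪a t, y⟫) (by fun_prop)
    refine ⟨b₀ t₀ - ⟪a t₀, y⟫, sub_pos.2 (hy t₀), fun t => ?_⟩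
    have : b₀ t₀ - ⟪a t₀, y⟫ ≤ b₀ t - ⟪a t, y⟫ := ht₀ (mem_univ t)
    linarith
  let K : ℝ := 1 + (‖c₀‖ + 1) * ‖y - x₀‖ / ρ
  have hK1 : 1 ≤ K := le_add_of_nonneg_right (by positivity)
  have hK : 0 < K := by linarith
  refine ⟨τ / K, by positivity, _, inter_mem h (Metric.ball_mem_nhds x₀ one_pos), _,
    Metric.ball_mem_nhds _ (lt_min one_pos hρ), ?_⟩
  rintro ⟨c, b⟩ hcb x ⟨hxf, hxo⟩ ⟨hxU, hx1⟩
  rw [mem_ball_iff_norm] at hx1 hcb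
  set ε := ‖((c, b) : EuclideanSpace ℝ (Fin n) × C(T, ℝ)) - (c₀, b₀)‖ with hε
  have hε0 : 0 ≤ ε := norm_nonneg _
  have hε1 : ε < 1 := hcb.trans_le (min_le_left _ _)
  have hερ : ε < ρ := hcb.trans_le (min_le_right _ _)
  have hcε : ‖c - c₀‖ ≤ ε :=
    norm_fst_le (((c, b) : EuclideanSpace ℝ (Fin n) × C(T, ℝ)) - (c₀, b₀))
  have hbε : ‖b - b₀‖ ≤ ε :=
    norm_snd_le (((c, b) : EuclideanSpace ℝ (Fin n) × C(T, ℝ)) - (c₀, b₀))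
  have hbt : ∀ t, |b t - b₀ t| ≤ ε := fun t => ((b - b₀).norm_coe_le_norm t).trans hbε
  have hres : sipReal a b₀ c₀ x₀ x ≤ K * ε := by
    refine sipReal_le_iff.2 ⟨?_, fun t => ?_⟩
    · -- a feasible point of the perturbed problem on the segment from `x₀` to the Slater point
      have hu : x₀ + (ε / ρ) • (y - x₀) ∈ feas a b := by
        intro t
        have h1 : ⟪a t, x₀⟫ ≤ b₀ t := hsol.1 t
        have h2 := hyρ t
        have h3 := (abs_le.1 (hbt t)).1
        rw [inner_add_right, inner_smul_right, inner_sub_right]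
        have hl0 : 0 ≤ ε / ρ := by positivity
        have hl1 : ε / ρ ≤ 1 := (div_le_one hρ).2 hερ.le
        have hlρ : ε / ρ * ρ = ε := div_mul_cancel₀ _ hρ.ne'
        nlinarith [mul_le_mul_of_nonneg_left h2 hl0,
          mul_le_mul_of_nonneg_left h1 (sub_nonneg.2 hl1)]
      have h1 : ⟪c, x⟫ ≤ ⟪c, x₀ + (ε / ρ) • (y - x₀)⟫ := hxo _ hu
      rw [inner_add_right, inner_smul_right] at h1
      have h2 : ⟪c, y - x₀⟫ ≤ (‖c₀‖ + 1) * ‖y - x₀‖ := by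
        refine (real_inner_le_norm _ _).trans (mul_le_mul_of_nonneg_right ?_ (norm_nonneg _))
        have := norm_le_norm_add_norm_sub' c c₀
        linarith
      have h3 : -⟪c - c₀, x - x₀⟫ ≤ ε := by
        have h4 := neg_le_of_abs_le (abs_real_inner_le_norm (c - c₀) (x - x₀))
        have h5 : ‖c - c₀‖ * ‖x - x₀‖ ≤ ε * 1 :=
          mul_le_mul hcε hx1.le (norm_nonneg _) hε0
        linarith
      rw [inner_sub_left] at h3
      have h6 : ⟪c, x - x₀⟫ = ⟪c, x⟫ - ⟪c, x₀⟫ := inner_sub_right _ _ _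
      have h7 := mul_le_mul_of_nonneg_left h2 (show 0 ≤ ε / ρ by positivity)
      have h8 : K * ε = ε + ε / ρ * ((‖c₀‖ + 1) * ‖y - x₀‖) := by
        simp only [K]
        ring
      linarith
    · have h1 : ⟪a t, x⟫ ≤ b t := hxf t
      nlinarith [(abs_le.1 (hbt t)).2]
  have h9 : τ * ‖x - x₀‖ ^ q ≤ K * ε := le_trans hxU hres
  rw [div_mul_eq_mul_div, div_le_iff₀ hK]
  linarith

/-- Every point `x` solves a problem with the nominal objective and a
right-hand side within `K f(x)` of the nominal one: the constraints carrying the multipliers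
at `x₀` are made active at `x`. -/
lemma exists_sol_near (hsol : x₀ ∈ sol a (c₀, b₀))
    (hslater : ∃ xSlater, ∀ t : T, ⟪a t, xSlater⟫ < b₀ t) :
    ∃ K > 0, ∀ x, ∃ b : C(T, ℝ), ‖b - b₀‖ ≤ K * sipReal a b₀ c₀ x₀ x ∧ x ∈ sol a (c₀, b) := by
  obtain ⟨ι, _, l, s, hl0, hc, hact⟩ := exists_kkt a b₀ c₀ x₀ hsol hslater
  -- the summands with `l i = 0` vanish, since division by zero yields `0`
  let L : ι → ℝ := fun i => (1 + ∑ j, l j) / l i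
  have hsum0 : 0 ≤ ∑ j, l j := Finset.sum_nonneg fun j _ => hl0 j
  have hL0 : ∀ i, 0 ≤ L i := fun i => div_nonneg (by linarith) (hl0 i)
  let K : ℝ := 1 + ∑ i, L i
  have hLsum : 0 ≤ ∑ i, L i := Finset.sum_nonneg fun i _ => hL0 i
  have hLK : ∀ i, L i ≤ K := fun i =>
    (Finset.single_le_sum (fun j _ => hL0 j) (Finset.mem_univ i)).trans
      (le_add_of_nonneg_left zero_le_one)
  have hK1 : 1 ≤ K := le_add_of_nonneg_right hLsum
  refine ⟨K, by linarith, fun x => ?_⟩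
  set r := sipReal a b₀ c₀ x₀ x with hr
  have hr0 : 0 ≤ r := sipReal_nonneg hsol x
  obtain ⟨h1, h2⟩ := sipReal_le_iff.1 hr.ge
  have hcv : ∀ v, ⟪c₀, v⟫ = -∑ i, l i * ⟪a (s i), v⟫ := by
    intro v
    rw [hc, inner_neg_left, sum_inner]
    simp only [real_inner_smul_left]
  have hslack : ∀ i, 0 < l i → b₀ (s i) - K * r ≤ ⟪a (s i), x⟫ := by
    intro i hi
    have hterm : ∀ j, l j * (r - (⟪a (s j), x⟫ - b₀ (s j))) =
        l j * r - l j * ⟪a (s j), x - x₀⟫ := by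
      intro j
      rcases (hl0 j).eq_or_lt with h | h
      · simp [← h]
      · rw [inner_sub_right, hact j h]
        ring
    have hle : l i * (r - (⟪a (s i), x⟫ - b₀ (s i))) ≤
        ∑ j, l j * (r - (⟪a (s j), x⟫ - b₀ (s j))) :=
      Finset.single_le_sum (f := fun j => l j * (r - (⟪a (s j), x⟫ - b₀ (s j))))
        (fun j _ => mul_nonneg (hl0 j) (sub_nonneg.2 (h2 (s j)))) (Finset.mem_univ i)
    have hsumeq : ∑ j, l j * (r - (⟪a (s j), x⟫ - b₀ (s j))) =
        (∑ j, l j) * r + ⟪c₀, x - x₀⟫ := by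
      rw [hcv, Finset.sum_congr rfl fun j _ => hterm j, Finset.sum_sub_distrib, Finset.sum_mul]
      ring
    rw [hsumeq] at hle
    have h3 : l i * (b₀ (s i) - ⟪a (s i), x⟫) ≤ (1 + ∑ j, l j) * r := by
      nlinarith [mul_nonneg hi.le hr0]
    have h4 : b₀ (s i) - ⟪a (s i), x⟫ ≤ L i * r := by
      simp only [L]
      rw [div_mul_eq_mul_div, le_div_iff₀ hi]
      linarith
    linarith [mul_le_mul_of_nonneg_right (hLK i) hr0]
  refine ⟨⟨fun t => max ⟪a t, x⟫ (b₀ t - K * r), by fun_prop⟩, ?_, ?_, ?_⟩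
  · refine (ContinuousMap.norm_le _ (by positivity)).2 fun t => ?_
    change |max ⟪a t, x⟫ (b₀ t - K * r) - b₀ t| ≤ K * r
    have h3 : r ≤ K * r := le_mul_of_one_le_left hr0 hK1
    rw [abs_le]
    constructor
    · linarith [le_max_right ⟪a t, x⟫ (b₀ t - K * r)]
    · rw [sub_le_iff_le_add]
      exact max_le (by linarith [h2 t]) (by linarith)
  · intro t
    exact le_max_left _ _
  · intro u hu
    change ⟪c₀, x⟫ ≤ ⟪c₀, u⟫
    rw [hcv, hcv, neg_le_neg_iff]
    refine Finset.sum_le_sum fun i _ => ?_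
    rcases (hl0 i).eq_or_lt with h | h
    · simp [← h]
    · have h3 : ⟪a (s i), u⟫ ≤ max ⟪a (s i), x⟫ (b₀ (s i) - K * r) := hu (s i)
      rw [max_eq_left (hslack i h)] at h3
      exact mul_le_mul_of_nonneg_left h3 h.le

lemma sharp_of_calm_partial (hsol : x₀ ∈ sol a (c₀, b₀))
    (hslater : ∃ xSlater, ∀ t : T, ⟪a t, xSlater⟫ < b₀ t) {q τ : ℝ} (hτ : 0 < τ)
    (h : CalmWith q τ (fun b => sol a (c₀, b)) b₀ x₀) :
    ∃ τ > 0, ∀ᶠ x in 𝓝 x₀, τ * ‖x - x₀‖ ^ q ≤ sipReal a b₀ c₀ x₀ x := by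
  obtain ⟨K, hK, hnear⟩ := exists_sol_near hsol hslater
  obtain ⟨U, hU, V, hV, hcalm⟩ := h
  obtain ⟨δ, hδ, hδV⟩ := Metric.mem_nhds_iff.1 hV
  refine ⟨τ / K, by positivity, ?_⟩
  filter_upwards [hU, (tendsto_sipReal hsol).eventually_lt_const (div_pos hδ hK)] with x hxU hx
  obtain ⟨b, hb, hxb⟩ := hnear x
  have hbV : b ∈ V := by
    refine hδV (mem_ball_iff_norm.2 (hb.trans_lt ?_))
    rw [lt_div_iff₀ hK] at hx
    linarith
  have := hcalm b hbV x hxb hxU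
  rw [div_mul_eq_mul_div, div_le_iff₀ hK]
  linarith

end Sip

/-- under the Slater condition, the following are equivalent:
(i) `q`-order isolated calmness of `S` at `((c̄, b̄), x̄)`; (ii) the same for `S_c̄` at
`(b̄, x̄)`; (iii) the same for `L` at `((⟨c̄, x̄⟩, b̄), x̄)`; (iv) `x̄` is a `q`-order sharp
minimizer of `f`; (v) `‖f'_q(x̄;·)‖_q > 0`; each implies
(vi) `‖D_{1/q} S_c̄(b̄, x̄)‖⁺_{1/q} < +∞`; and when `T` is finite (vi) is equivalent to
(i)–(v) and `clm_q S_c̄(b̄, x̄) = (‖D_{1/q} S_c̄(b̄, x̄)‖⁺_{1/q})^{-q}`. -/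
theorem stmt18 {n : ℕ} {T : Type*} [TopologicalSpace T] [CompactSpace T] [T2Space T]
    [Nonempty T] (q : ℝ) (hq : 0 < q)
    (a : C(T, EuclideanSpace ℝ (Fin n))) (b₀ : C(T, ℝ))
    (c₀ x₀ : EuclideanSpace ℝ (Fin n))
    (hsol : x₀ ∈ sol a (c₀, b₀))
    (hslater : ∃ xSlater, ∀ t : T, ⟪a t, xSlater⟫ < b₀ t) :
    ((∃ τ > 0, CalmWith q τ (sol a) (c₀, b₀) x₀) ↔
      (∃ τ > 0, CalmWith q τ (fun b => sol a (c₀, b)) b₀ x₀)) ∧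
    ((∃ τ > 0, CalmWith q τ (sol a) (c₀, b₀) x₀) ↔
      (∃ τ > 0, CalmWith q τ (lev a c₀) (⟪c₀, x₀⟫, b₀) x₀)) ∧
    ((∃ τ > 0, CalmWith q τ (sol a) (c₀, b₀) x₀) ↔
      (∃ τ > 0, SharpMinWith q τ (sipObj a b₀ c₀ x₀) x₀)) ∧
    ((∃ τ > 0, CalmWith q τ (sol a) (c₀, b₀) x₀) ↔
      0 < subderNorm q (sipObj a b₀ c₀ x₀) x₀) ∧
    ((∃ τ > 0, CalmWith q τ (sol a) (c₀, b₀) x₀) →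
      plusNorm (1 / q) (gder (1 / q) (fun b => sol a (c₀, b)) b₀ x₀) < ⊤) ∧
    (Finite T →
      (plusNorm (1 / q) (gder (1 / q) (fun b => sol a (c₀, b)) b₀ x₀) < ⊤ →
        (∃ τ > 0, CalmWith q τ (sol a) (c₀, b₀) x₀)) ∧
      clmMod q (fun b => sol a (c₀, b)) b₀ x₀ =
        (plusNorm (1 / q) (gder (1 / q) (fun b => sol a (c₀, b)) b₀ x₀)) ^ (-q)) := by
  have hsharp : (∃ τ > 0, SharpMinWith q τ (sipObj a b₀ c₀ x₀) x₀) ↔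
      ∃ τ > 0, ∀ᶠ x in 𝓝 x₀, τ * ‖x - x₀‖ ^ q ≤ sipReal a b₀ c₀ x₀ x := by
    simp only [sharpMinWith_iff hsol]
  have hlev : (∃ τ > 0, CalmWith q τ (lev a c₀) (⟪c₀, x₀⟫, b₀) x₀) ↔
      ∃ τ > 0, ∀ᶠ x in 𝓝 x₀, τ * ‖x - x₀‖ ^ q ≤ sipReal a b₀ c₀ x₀ x := by
    simp only [calmWith_lev_iff hsol]
  have h12 : (∃ τ > 0, CalmWith q τ (sol a) (c₀, b₀) x₀) →
      ∃ τ > 0, CalmWith q τ (fun b => sol a (c₀, b)) b₀ x₀ :=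
    fun ⟨τ, hτ, h⟩ => ⟨τ, hτ, calm_partial_of_calm h⟩
  have h24 : (∃ τ > 0, CalmWith q τ (fun b => sol a (c₀, b)) b₀ x₀) →
      ∃ τ > 0, ∀ᶠ x in 𝓝 x₀, τ * ‖x - x₀‖ ^ q ≤ sipReal a b₀ c₀ x₀ x :=
    fun ⟨_, hτ, h⟩ => sharp_of_calm_partial hsol hslater hτ h
  have h41 : (∃ τ > 0, ∀ᶠ x in 𝓝 x₀, τ * ‖x - x₀‖ ^ q ≤ sipReal a b₀ c₀ x₀ x) →
      ∃ τ > 0, CalmWith q τ (sol a) (c₀, b₀) x₀ :=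
    fun ⟨_, hτ, h⟩ => calm_sol_of_sharp hsol hslater hτ h
  refine ⟨⟨h12, fun h => h41 (h24 h)⟩, ?_, ?_, ?_, ?_, ?_⟩
  · rw [hlev]
    exact ⟨fun h => h24 (h12 h), h41⟩
  · rw [hsharp]
    exact ⟨fun h => h24 (h12 h), h41⟩
  · change _ ↔ 0 < subderNorm q (fun x => (sipReal a b₀ c₀ x₀ x : EReal)) x₀
    rw [← sharpMin_iff_subderNorm_pos hq _ x₀ (sipReal_self hsol)]
    exact ⟨fun h => h24 (h12 h), h41⟩
  · intro h
    obtain ⟨τ, hτ, h⟩ := h12 h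
    refine (plusNorm_gder_le_of_calm hq hτ h).trans_lt ?_
    rw [ENNReal.ofReal_rpow_of_pos hτ]
    exact ENNReal.ofReal_lt_top
  · intro hT
    have : FiniteDimensional ℝ C(T, ℝ) :=
      FiniteDimensional.of_injective (ContinuousMap.coeFnLinearMap ℝ (M := ℝ))
        DFunLike.coe_injective
    have : ProperSpace C(T, ℝ) := FiniteDimensional.proper_real _
    refine ⟨fun h => h41 (h24 ?_), le_antisymm (clmMod_le_plusNorm_rpow hq _ _ _)
      (plusNorm_rpow_le_clmMod hq _ _ _)⟩
    have hpos : 0 < plusNorm (1 / q) (gder (1 / q) (fun b => sol a (c₀, b)) b₀ x₀) ^ (-q) := by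
      rw [ENNReal.rpow_neg, ENNReal.inv_pos]
      exact ENNReal.rpow_ne_top_of_nonneg hq.le h.ne
    obtain ⟨m, hm0, hm⟩ := ENNReal.lt_iff_exists_nnreal_btwn.1 hpos
    have hm0 : (0 : ℝ) < m := by exact_mod_cast hm0
    rw [← ENNReal.ofReal_coe_nnreal] at hm
    exact ⟨m, hm0, calm_of_lt_plusNorm_rpow hq hm0 hm⟩

end
end
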